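/- arXiv:math/0403171 — 2 statements merged into one kernel-verified Lean document; each statement's English description precedes it below -/
import Mathlib

section
/- In the Coxeter setting below, assume W is finite with longest element w_0. Then (−w_0) ∘ P_{w_0} = P_{w_0} ∘ (−w_0) as transformations of continuous paths starting at 0, where (−w_0) acts on a path π pointwise by ((−w_0)π)(t) = −w_0(π(t)). -/
/-- The Pitman transform associated with a pair `(α, α∨)`:
`P_α π (t) = π t − (inf_{0 ≤ s ≤ t} α∨(π s)) • α`. -/
noncomputable def pitman {V : Type*} [AddCommGroup V] [Module ℝ V]
    (α : V) (αv : Module.Dual ℝ V) (π : ℝ → V) : ℝ → V :=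
  fun t => π t - sInf ((fun s => αv (π s)) '' Set.Icc 0 t) • α

/-- The composite Pitman transform `P_{α_{s₁}} ∘ ⋯ ∘ P_{α_{s_l}}` along a word
`l = [s₁, …, s_l]` in the generators. -/
noncomputable def pitmanWord {V : Type*} [AddCommGroup V] [Module ℝ V] {B : Type*}
    (α : B → V) (αv : B → Module.Dual ℝ V) (l : List B) : (ℝ → V) → (ℝ → V) :=
  l.foldr (fun s f => pitman (α s) (αv s) ∘ f) id


namespace PitmanAux

open Set

/-- Running infimum. -/
noncomputable def rinf (f : ℝ → ℝ) (t : ℝ) : ℝ := sInf (f '' Icc 0 t)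

/-- Continuous functions vanishing at the origin. -/
def C0 (f : ℝ → ℝ) : Prop := Continuous f ∧ f 0 = 0

theorem rinf_neg (f : ℝ → ℝ) {t : ℝ} (ht : t < 0) : rinf f t = 0 := by
  simp [rinf, Icc_eq_empty (not_le.2 ht)]

theorem rinf_zero (f : ℝ → ℝ) : rinf f 0 = f 0 := by
  simp [rinf]

theorem rinf_attained {f : ℝ → ℝ} (hf : C0 f) {t : ℝ} (ht : 0 ≤ t) :
    ∃ s, 0 ≤ s ∧ s ≤ t ∧ rinf f t = f s := by
  obtain ⟨x, hx, h⟩ := isCompact_Icc.exists_sInf_image_eq (nonempty_Icc.2 ht) hf.1.continuousOn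
  exact ⟨x, hx.1, hx.2, h⟩

theorem rinf_le {f : ℝ → ℝ} (hf : C0 f) {s t : ℝ} (hs : 0 ≤ s) (hst : s ≤ t) :
    rinf f t ≤ f s :=
  ContinuousOn.sInf_image_Icc_le hf.1.continuousOn ⟨hs, hst⟩

theorem rinf_anti {f : ℝ → ℝ} (hf : C0 f) {s t : ℝ} (hs : 0 ≤ s) (hst : s ≤ t) :
    rinf f t ≤ rinf f s := by
  obtain ⟨u, hu0, hus, h⟩ := rinf_attained hf hs
  rw [h]
  exact rinf_le hf hu0 (hus.trans hst)

theorem rinf_C0 {f : ℝ → ℝ} (hf : C0 f) : C0 (rinf f) := by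
  refine ⟨?_, by rw [rinf_zero, hf.2]⟩
  have key : rinf f = fun t => sInf ((fun r => f (r * max t 0)) '' Icc (0:ℝ) 1) := by
    funext t
    rcases lt_or_ge t 0 with ht | ht
    · rw [rinf_neg f ht]
      have : (fun r : ℝ => f (r * max t 0)) = fun _ => 0 := by
        funext r
        rw [max_eq_right ht.le, mul_zero, hf.2]
      rw [this]
      simp
    · rw [max_eq_left ht, rinf]
      congr 1
      ext y
      constructor
      · rintro ⟨s, ⟨hs0, hst⟩, rfl⟩
        rcases eq_or_lt_of_le ht with h | h
        · exact ⟨0, ⟨le_rfl, zero_le_one⟩, by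
            have : s = 0 := by linarith
            simp [this]⟩
        · exact ⟨s / t, ⟨by positivity, by rw [div_le_one h]; exact hst⟩, by
            dsimp only
            rw [div_mul_cancel₀ _ h.ne']⟩
      · rintro ⟨r, ⟨h0, h1⟩, rfl⟩
        exact ⟨r * t, ⟨by positivity, by nlinarith⟩, rfl⟩
  rw [key]
  refine isCompact_Icc.continuous_sInf (f := fun t r => f (r * max t 0)) ?_
  have := hf.1
  show Continuous (fun p : ℝ × ℝ => f (p.2 * max p.1 0))
  fun_prop

theorem C0_zero : C0 (fun _ => 0) := ⟨continuous_const, rfl⟩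

theorem C0_add {f g : ℝ → ℝ} (hf : C0 f) (hg : C0 g) : C0 (fun s => f s + g s) :=
  ⟨hf.1.add hg.1, by simp [hf.2, hg.2]⟩

theorem C0_mul (c : ℝ) {f : ℝ → ℝ} (hf : C0 f) : C0 (fun s => c * f s) :=
  ⟨continuous_const.mul hf.1, by simp [hf.2]⟩

theorem C0_sub {f g : ℝ → ℝ} (hf : C0 f) (hg : C0 g) : C0 (fun s => f s - g s) :=
  ⟨hf.1.sub hg.1, by simp [hf.2, hg.2]⟩

theorem rinf_mul {c : ℝ} (hc : 0 ≤ c) (f : ℝ → ℝ) (t : ℝ) :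
    rinf (fun s => c * f s) t = c * rinf f t := by
  have := Real.sInf_smul_of_nonneg hc (f '' Icc 0 t)
  rw [rinf, rinf, ← smul_eq_mul c, ← this, ← image_smul, image_image]
  rfl

theorem hit_lemma {a : ℝ → ℝ} (ha : C0 a) {u s t : ℝ} (hu : 0 ≤ u) (hus : u ≤ s) (hst : s ≤ t) :
    ∃ s', u ≤ s' ∧ s' ≤ t ∧
      rinf a t + a s' - 2 * rinf a s' + rinf a u ≤ a s := by
  have hz1 := rinf_anti ha hu hus
  have hz2 := rinf_anti ha (hu.trans hus) hst
  rcases eq_or_lt_of_le (hz2.trans hz1) with h | h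
  · exact ⟨s, hus, hst, by linarith⟩
  · obtain ⟨v, hv0, hvt, hv⟩ := rinf_attained ha (hu.trans (hus.trans hst))
    have huv : u ≤ v := by
      by_contra hc
      have := rinf_le ha hv0 (not_le.1 hc).le
      linarith
    have hau : rinf a u ≤ a u := rinf_le ha hu le_rfl
    have hne : ({r | a r = rinf a u} ∩ Icc u v).Nonempty := by
      have := intermediate_value_Icc' huv ha.1.continuousOn
      obtain ⟨r, hr, hr'⟩ := this (show rinf a u ∈ Icc (a v) (a u) from ⟨by linarith, hau⟩)
      exact ⟨r, hr', hr⟩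
    have hcl : IsClosed {r | a r = rinf a u} := isClosed_eq ha.1 continuous_const
    obtain ⟨p, ⟨hp1, hp2⟩, hp3⟩ := (isCompact_Icc.inter_left hcl).exists_isLeast hne
    have hp1' : a p = rinf a u := hp1
    have hzp : rinf a p = rinf a u := by
      apply le_antisymm (rinf_anti ha hu hp2.1)
      obtain ⟨q, hq0, hqp, hq⟩ := rinf_attained ha (hu.trans hp2.1)
      rw [hq]
      rcases le_total q u with hqu | hqu
      · exact rinf_le ha hq0 hqu
      · by_contra hc
        push Not at hc
        obtain ⟨r, hr, hr'⟩ := intermediate_value_Icc' hqu ha.1.continuousOn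
          (show rinf a u ∈ Icc (a q) (a u) from ⟨hc.le, hau⟩)
        have : p ≤ r := hp3 ⟨hr', hr.1, hr.2.trans (hqp.trans hp2.2)⟩
        have hqr : q = p := le_antisymm hqp (this.trans hr.2)
        rw [hqr] at hc
        linarith
    refine ⟨p, hp2.1, hp2.2.trans hvt, ?_⟩
    have := rinf_le ha (hu.trans hus) hst
    linarith

theorem key_lemma {c : ℝ} (hc : 0 ≤ c) {a h : ℝ → ℝ} (ha : C0 a) (hh : C0 h) (t : ℝ) :
    c * rinf a t + rinf (fun s => c * (a s - 2 * rinf a s)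
        + rinf (fun u => h u + c * rinf a u) s) t
      = rinf (fun s => c * a s + rinf h s) t := by
  rcases lt_or_ge t 0 with ht | ht
  · simp [rinf_neg _ ht]
  have hz := rinf_C0 ha
  have hin : C0 (fun u => h u + c * rinf a u) := C0_add hh (C0_mul c hz)
  have hL : C0 (fun s => c * (a s - 2 * rinf a s) + rinf (fun u => h u + c * rinf a u) s) :=
    C0_add (C0_mul c (C0_sub ha (C0_mul 2 hz))) (rinf_C0 hin)
  have hR : C0 (fun s => c * a s + rinf h s) := C0_add (C0_mul c ha) (rinf_C0 hh)
  apply le_antisymm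
  · obtain ⟨s, hs0, hst, hs⟩ := rinf_attained hR ht
    obtain ⟨u, hu0, hus, hu⟩ := rinf_attained hh hs0
    obtain ⟨p, hup, hpt, hp⟩ := hit_lemma ha hu0 hus hst
    rw [hs, hu]
    have h1 := rinf_le hL (hu0.trans hup) hpt
    have h2 := rinf_le hin hu0 hup
    have h3 := mul_le_mul_of_nonneg_left hp hc
    linarith
  · obtain ⟨s, hs0, hst, hs⟩ := rinf_attained hL ht
    obtain ⟨u, hu0, hus, hu⟩ := rinf_attained hin hs0
    rw [hs, hu]
    have hz1 := rinf_anti ha hu0 hus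
    have hz2 := rinf_anti ha hs0 hst
    have h4 := rinf_le ha hs0 le_rfl
    have : ∃ p, u ≤ p ∧ p ≤ t ∧ a p ≤ rinf a t + a s - 2 * rinf a s + rinf a u := by
      obtain ⟨v, hv0, hvt, hv⟩ := rinf_attained ha ht
      rcases le_total u v with huv | huv
      · exact ⟨v, huv, hvt, by linarith⟩
      · have := rinf_le ha hv0 huv
        exact ⟨s, hus, hst, by linarith⟩
    obtain ⟨p, hup, hpt, hp⟩ := this
    have h1 := rinf_le hR (hu0.trans hup) hpt
    have h2 := rinf_le hh hu0 hup
    have h3 := mul_le_mul_of_nonneg_left hp hc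
    linarith

/-- Chebyshev-type sequence. -/
noncomputable def cheb (r : ℝ) : ℕ → ℝ
  | 0 => 0
  | 1 => 1
  | (n + 2) => 2 * r * cheb r (n + 1) - cheb r n

/-- Nested infimum with `n` terms starting at coefficient index `j + 1`; the innermost
function is `a`. -/
noncomputable def nest (r : ℝ) (a b : ℝ → ℝ) : ℕ → ℕ → ℝ → ℝ
  | 0, _ => fun _ => 0
  | (n + 1), j => rinf (fun s => cheb r (j + 1) * (if Even n then a s else b s)
      + nest r a b n (j + 1) s)

theorem nest_C0 (r : ℝ) {a b : ℝ → ℝ} (ha : C0 a) (hb : C0 b) (n j : ℕ) :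
    C0 (nest r a b n j) := by
  induction n generalizing j with
  | zero => exact C0_zero
  | succ n ih =>
    rw [nest]
    apply rinf_C0
    apply C0_add _ (ih _)
    apply C0_mul
    split_ifs <;> assumption

theorem nest_last_zero (r : ℝ) (a b : ℝ → ℝ) (n j : ℕ) (h : cheb r (j + n + 1) = 0) :
    nest r a b (n + 1) j = nest r b a n j := by
  induction n generalizing j with
  | zero =>
    simp only [add_zero] at h
    funext t
    simp only [nest, h]
    simp only [rinf, zero_mul, add_zero]
    rcases (Icc (0:ℝ) t).eq_empty_or_nonempty with h | h
    · simp [h]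
    · simp [h.image_const]
  | succ n ih =>
    rw [nest, ih (j + 1) (by rw [← h]; congr 1; ring)]
    conv_rhs => rw [nest]
    congr 1
    funext s
    congr 2
    simp only [Nat.even_add_one]
    by_cases hn : Even n <;> simp [hn]

theorem nest_even (r : ℝ) {a b : ℝ → ℝ} (ha : C0 a) (hb : C0 b) (k : ℕ) :
    ∀ j, (∀ i, i ≤ j + 2 * k + 1 → 0 ≤ cheb r i) → ∀ t,
    cheb r (j + 1) * rinf a t
      + nest r (fun s => b s + 2 * r * rinf a s) (fun s => a s - 2 * rinf a s) (2 * k) j t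
      = nest r a b (2 * k + 1) j t := by
  induction k with
  | zero =>
    intro j hj t
    simp only [nest, add_zero, Even.zero, if_true]
    rw [rinf_mul (hj _ (by omega))]
  | succ k ih =>
    intro j hj t
    have e1 : ¬ Even (2 * k + 1) := by simp
    have e2 : Even (2 * k) := by simp
    have e3 : Even (2 * k + 1 + 1) := by simp [Nat.even_add_one]
    rw [show 2 * (k + 1) = 2 * k + 1 + 1 by ring]
    rw [nest, nest]
    conv_rhs => rw [nest, nest]
    simp only [e1, e2, e3, if_true, if_false]
    rw [← key_lemma (hj _ (by omega)) ha (C0_add (C0_mul _ hb) (nest_C0 r ha hb _ _))]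
    congr 3
    funext s
    congr 2
    funext u
    rw [← ih (j + 1 + 1) (fun i hi => hj i (by omega)) u]
    simp only [cheb]
    ring

theorem nest_odd (r : ℝ) {a b : ℝ → ℝ} (ha : C0 a) (hb : C0 b) (k : ℕ)
    (hk : ∀ i, i ≤ 2 * k + 2 → 0 ≤ cheb r i) (t : ℝ) :
    nest r (fun s => b s + 2 * r * rinf a s) (fun s => a s - 2 * rinf a s) (2 * k + 1) 0 t
      = nest r a b (2 * k + 2) 0 t := by
  have e1 : ¬ Even (2 * k + 1) := by simp
  have e2 : Even (2 * k) := by simp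
  rw [nest]
  conv_rhs => rw [nest]
  simp only [e1, e2, if_true, if_false]
  congr 1
  funext s
  rw [← nest_even r ha hb k (0 + 1) (fun i hi => hk i (by omega)) s]
  simp only [cheb]
  ring

theorem pitmanWord_concat {V : Type*} [AddCommGroup V] [Module ℝ V] {B : Type*}
    (α : B → V) (αv : B → Module.Dual ℝ V) (l : List B) (s : B) (π : ℝ → V) :
    pitmanWord α αv (l.concat s) π = pitmanWord α αv l (pitman (α s) (αv s) π) := by
  induction l with
  | nil => rfl
  | cons x l ih =>
    show pitman (α x) (αv x) (pitmanWord α αv (l.concat s) π) = _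
    rw [ih]
    rfl

theorem pitman_eq_rinf {V : Type*} [AddCommGroup V] [Module ℝ V]
    (α : V) (αv : Module.Dual ℝ V) (π : ℝ → V) :
    pitman α αv π = fun t => π t - rinf (fun s => αv (π s)) t • α := rfl

/-- Continuous paths starting at the origin, tested against all linear forms. -/
def Path0 {V : Type*} [AddCommGroup V] [Module ℝ V] (π : ℝ → V) : Prop :=
  ∀ f : Module.Dual ℝ V, C0 (fun s => f (π s))

theorem Path0_pitman {V : Type*} [AddCommGroup V] [Module ℝ V]
    (α : V) (αv : Module.Dual ℝ V) {π : ℝ → V} (h : Path0 π) : Path0 (pitman α αv π) := by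
  intro f
  have : (fun s => f (pitman α αv π s))
      = fun s => f (π s) - f α * rinf (fun s => αv (π s)) s := by
    funext s
    rw [pitman_eq_rinf]
    simp [mul_comm]
  rw [this]
  exact C0_sub (h f) (C0_mul _ (rinf_C0 (h αv)))

theorem Path0_pitmanWord {V : Type*} [AddCommGroup V] [Module ℝ V] {B : Type*}
    (α : B → V) (αv : B → Module.Dual ℝ V) (l : List B) {π : ℝ → V} (h : Path0 π) :
    Path0 (pitmanWord α αv l π) := by
  induction l with
  | nil => exact h
  | cons x l ih => exact Path0_pitman _ _ ih

theorem pitmanWord_alt {V : Type*} [AddCommGroup V] [Module ℝ V] {B : Type*}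
    (α : B → V) (αv : B → Module.Dual ℝ V) (r : ℝ) (n : ℕ)
    (hn : ∀ i, i ≤ n → 0 ≤ cheb r i) (i j : B)
    (hi : αv i (α i) = 2) (hj : αv j (α j) = 2)
    (hij : αv i (α j) = -(2 * r)) (hji : αv j (α i) = -(2 * r))
    (π : ℝ → V) (hπ : Path0 π) (t : ℝ) :
    pitmanWord α αv (CoxeterSystem.alternatingWord i j n) π t
      = π t - nest r (fun s => αv j (π s)) (fun s => αv i (π s))
          (if Even n then n - 1 else n) 0 t • α j
        - nest r (fun s => αv j (π s)) (fun s => αv i (π s))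
          (if Even n then n else n - 1) 0 t • α i := by
  induction n generalizing i j π with
  | zero => simp [CoxeterSystem.alternatingWord, pitmanWord, nest]
  | succ n ih =>
    rw [CoxeterSystem.alternatingWord_succ, pitmanWord_concat,
      ih (fun i hi => hn i (by omega)) j i hj hi hji hij _ (Path0_pitman _ _ hπ)]
    have ea : (fun s => αv i (pitman (α j) (αv j) π s))
        = fun s => αv i (π s) + 2 * r * rinf (fun s => αv j (π s)) s := by
      funext s
      rw [pitman_eq_rinf]
      simp [hij]
      ring
    have eb : (fun s => αv j (pitman (α j) (αv j) π s))
        = fun s => αv j (π s) - 2 * rinf (fun s => αv j (π s)) s := by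
      funext s
      rw [pitman_eq_rinf]
      simp [hj]
      ring
    rw [ea, eb]
    rcases Nat.even_or_odd' n with ⟨k, rfl | rfl⟩
    · have e1 : ¬ Even (2 * k + 1) := by simp
      have e2 : Even (2 * k) := by simp
      simp only [e1, e2, if_true, if_false, Nat.add_sub_cancel]
      have h1 := nest_even r (hπ (αv j)) (hπ (αv i)) k 0 (fun i hi => hn i (by omega)) t
      rw [← h1]
      have h2 : nest r (fun s => αv i (π s) + 2 * r * rinf (fun s => αv j (π s)) s)
          (fun s => αv j (π s) - 2 * rinf (fun s => αv j (π s)) s) (2 * k - 1) 0 t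
          = nest r (fun s => αv j (π s)) (fun s => αv i (π s)) (2 * k) 0 t := by
        rcases k with _ | k
        · rfl
        · exact nest_odd r (hπ (αv j)) (hπ (αv i)) k (fun i hi => hn i (by omega)) t
      rw [h2, pitman_eq_rinf]
      simp only [cheb, one_mul, add_smul]
      abel
    · have e1 : ¬ Even (2 * k + 1) := by simp
      have e3 : Even (2 * k + 1 + 1) := by simp [Nat.even_add_one]
      simp only [e1, e3, if_true, if_false, Nat.add_sub_cancel]
      rw [nest_odd r (hπ (αv j)) (hπ (αv i)) k (fun i hi => hn i (by omega)) t,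
        ← nest_even r (hπ (αv j)) (hπ (αv i)) k 0 (fun i hi => hn i (by omega)) t,
        pitman_eq_rinf]
      simp only [cheb, one_mul, add_smul]
      abel

theorem pitman_braid_symm {V : Type*} [AddCommGroup V] [Module ℝ V] {B : Type*}
    (α : B → V) (αv : B → Module.Dual ℝ V) (r : ℝ) (m : ℕ) (hm : 0 < m)
    (hn : ∀ i, i ≤ m → 0 ≤ cheb r i) (hm0 : cheb r m = 0) (i j : B)
    (hi : αv i (α i) = 2) (hj : αv j (α j) = 2)
    (hij : αv i (α j) = -(2 * r)) (hji : αv j (α i) = -(2 * r))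
    (π : ℝ → V) (hπ : Path0 π) :
    pitmanWord α αv (CoxeterSystem.alternatingWord i j m) π
      = pitmanWord α αv (CoxeterSystem.alternatingWord j i m) π := by
  funext t
  rw [pitmanWord_alt α αv r m hn i j hi hj hij hji π hπ,
    pitmanWord_alt α αv r m hn j i hj hi hji hij π hπ]
  obtain ⟨n, rfl⟩ : ∃ n, m = n + 1 := ⟨m - 1, by omega⟩
  have h0 : cheb r (0 + n + 1) = 0 := by rw [zero_add]; exact hm0
  by_cases he : Even (n + 1)
  · simp only [he, if_true, Nat.add_sub_cancel]
    rw [nest_last_zero r _ _ n 0 h0, nest_last_zero r _ _ n 0 h0]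
    abel
  · simp only [he, if_false, Nat.add_sub_cancel]
    rw [nest_last_zero r _ _ n 0 h0, nest_last_zero r _ _ n 0 h0]
    abel

theorem pitman_scale {V : Type*} [AddCommGroup V] [Module ℝ V]
    (α : V) (αv : Module.Dual ℝ V) {c : ℝ} (hc : 0 < c) :
    pitman (c • α) (c⁻¹ • αv) = pitman α αv := by
  funext π t
  simp only [pitman_eq_rinf, LinearMap.smul_apply, smul_eq_mul]
  rw [rinf_mul (inv_nonneg.2 hc.le), smul_smul]
  congr 2
  field_simp

theorem pitman_braid {V : Type*} [AddCommGroup V] [Module ℝ V] {B : Type*}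
    (α : B → V) (αv : B → Module.Dual ℝ V) (r : ℝ) (m : ℕ) (hm : 0 < m)
    (hn : ∀ i, i ≤ m → 0 ≤ cheb r i) (hm0 : cheb r m = 0) (i j : B) (hne : i ≠ j)
    (hi : αv i (α i) = 2) (hj : αv j (α j) = 2) (c : ℝ) (hc : 0 < c)
    (hij : αv i (α j) = -(2 * r * c)) (hji : αv j (α i) = -(2 * r * c⁻¹))
    (π : ℝ → V) (hπ : Path0 π) :
    pitmanWord α αv (CoxeterSystem.alternatingWord i j m) π
      = pitmanWord α αv (CoxeterSystem.alternatingWord j i m) π := by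
  classical
  set d : B → ℝ := fun x => if x = i then c else 1 with hd
  have hdpos : ∀ x, 0 < d x := by
    intro x
    simp only [hd]
    split_ifs
    exacts [hc, one_pos]
  have e : ∀ l, pitmanWord α αv l = pitmanWord (fun x => d x • α x) (fun x => (d x)⁻¹ • αv x) l := by
    intro l
    simp only [pitmanWord, pitman_scale _ _ (hdpos _)]
  rw [e, e]
  have hdi : d i = c := by simp [hd]
  have hdj : d j = 1 := by simp [hd, hne.symm]
  apply pitman_braid_symm _ _ r m hm hn hm0 _ _ _ _ _ _ _ hπ
  · simp [hdi, hi, hc.ne']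
  · simp [hdj, hj]
  · simp only [hdi, hdj, one_smul, LinearMap.smul_apply, hij, smul_eq_mul]
    field_simp
  · simp only [hdi, hdj, one_smul, inv_one, map_smul, hji, smul_eq_mul]
    field_simp

end PitmanAux

namespace PitmanAux

open CoxeterSystem

theorem sin_mul_cheb (θ : ℝ) (n : ℕ) :
    Real.sin θ * cheb (Real.cos θ) n = Real.sin (n * θ) ∧
    Real.sin θ * cheb (Real.cos θ) (n + 1) = Real.sin ((n + 1 : ℕ) * θ) := by
  induction n with
  | zero => simp [cheb]
  | succ n ih =>
    refine ⟨ih.2, ?_⟩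
    have h1 := ih.1
    have h2 := ih.2
    have e1 : ((n + 1 + 1 : ℕ) : ℝ) * θ = ((n + 1 : ℕ) : ℝ) * θ + θ := by push_cast; ring
    have e2 : (n : ℝ) * θ = ((n + 1 : ℕ) : ℝ) * θ - θ := by push_cast; ring
    rw [e2, Real.sin_sub] at h1
    rw [e1, Real.sin_add, cheb]
    linear_combination 2 * Real.cos θ * h2 - h1

theorem cheb_one (n : ℕ) : cheb 1 n = n ∧ cheb 1 (n + 1) = n + 1 := by
  induction n with
  | zero => simp [cheb]
  | succ n ih =>
    refine ⟨by push_cast; exact ih.2, ?_⟩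
    rw [cheb, ih.1, ih.2]
    push_cast
    ring

theorem cheb_nonneg (m : ℕ) (hm : m ≠ 1) (i : ℕ) (hi : m ≠ 0 → i ≤ m) :
    0 ≤ cheb (Real.cos (Real.pi / m)) i := by
  by_cases h0 : m = 0
  · subst h0
    simp [(cheb_one i).1]
  · have hm2 : (2 : ℝ) ≤ m := by exact_mod_cast (by omega : 2 ≤ m)
    have hpos : 0 < Real.sin (Real.pi / m) := by
      apply Real.sin_pos_of_pos_of_lt_pi (by positivity)
      rw [div_lt_iff₀ (by linarith)]
      nlinarith [Real.pi_pos]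
    have h := (sin_mul_cheb (Real.pi / m) i).1
    have h2 : 0 ≤ Real.sin (i * (Real.pi / m)) := by
      apply Real.sin_nonneg_of_nonneg_of_le_pi (by positivity)
      have : (i : ℝ) ≤ m := by exact_mod_cast hi h0
      rw [← mul_div_assoc, div_le_iff₀ (by linarith)]
      nlinarith [Real.pi_pos]
    rw [← h] at h2
    exact nonneg_of_mul_nonneg_right h2 hpos

theorem cheb_top (m : ℕ) (hm : 2 ≤ m) : cheb (Real.cos (Real.pi / m)) m = 0 := by
  have hm2 : (2 : ℝ) ≤ m := by exact_mod_cast hm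
  have hpos : 0 < Real.sin (Real.pi / m) := by
    apply Real.sin_pos_of_pos_of_lt_pi (by positivity)
    rw [div_lt_iff₀ (by linarith)]
    nlinarith [Real.pi_pos]
  have h := (sin_mul_cheb (Real.pi / m) m).1
  rw [mul_div_cancel₀ _ (by linarith), Real.sin_pi] at h
  exact (mul_eq_zero.1 h).resolve_left hpos.ne'

theorem pair_scale (m : ℕ) (hm : m ≠ 1) (p q : ℝ)
    (h : (m = 2 ∧ p = 0 ∧ q = 0) ∨ (p < 0 ∧ q < 0 ∧ p * q = 4 * Real.cos (Real.pi / m) ^ 2)) :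
    ∃ c : ℝ, 0 < c ∧ p = -(2 * Real.cos (Real.pi / m) * c) ∧
      q = -(2 * Real.cos (Real.pi / m) * c⁻¹) := by
  rcases h with ⟨rfl, rfl, rfl⟩ | ⟨hp, hq, hpq⟩
  · exact ⟨1, one_pos, by simp, by simp⟩
  · have hr0 : 0 ≤ Real.cos (Real.pi / m) := by
      apply Real.cos_nonneg_of_neg_pi_div_two_le_of_le
      · have : 0 ≤ Real.pi / m := by positivity
        linarith [Real.pi_pos]
      · by_cases h0 : m = 0
        · subst h0
          simp
          positivity
        · have hm2 : (2 : ℝ) ≤ m := by exact_mod_cast (by omega : 2 ≤ m)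
          exact div_le_div_of_nonneg_left Real.pi_pos.le (by norm_num) hm2
    have hr : 0 < Real.cos (Real.pi / m) := by
      rcases eq_or_lt_of_le hr0 with h | h
      · rw [← h] at hpq
        nlinarith [mul_pos_of_neg_of_neg hp hq]
      · exact h
    refine ⟨-p / (2 * Real.cos (Real.pi / m)), div_pos (by linarith) (by linarith), ?_, ?_⟩
    · field_simp
    · have := hp.ne
      field_simp
      linarith

variable {B W : Type*} [Group W] {M : CoxeterMatrix B} (cs : CoxeterSystem M W)

theorem alt_step (w : W) (s t : B) (k : ℕ)
    (h : ∃ v, w = v * cs.wordProd (alternatingWord s t (k + 1)) ∧ cs.length w = cs.length v + (k + 1)) :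
    ∃ v, w = v * cs.wordProd (alternatingWord s t k) ∧ cs.length w = cs.length v + k := by
  obtain ⟨v, hv, hl⟩ := h
  rw [alternatingWord_succ', wordProd_cons, ← mul_assoc] at hv
  refine ⟨_, hv, ?_⟩
  have h1 := cs.length_mul_le v (cs.simple (if Even k then t else s))
  have h2 := cs.length_mul_le (v * cs.simple (if Even k then t else s))
    (cs.wordProd (alternatingWord s t k))
  have h3 := cs.length_wordProd_le (alternatingWord s t k)
  rw [length_alternatingWord] at h3
  rw [length_simple] at h1
  rw [← hv] at h2
  omega

theorem alt_down (w : W) (s t : B) (k m : ℕ) (hmk : m ≤ k)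
    (h : ∃ v, w = v * cs.wordProd (alternatingWord s t k) ∧ cs.length w = cs.length v + k) :
    ∃ v, w = v * cs.wordProd (alternatingWord s t m) ∧ cs.length w = cs.length v + m := by
  induction k, hmk using Nat.le_induction with
  | base => exact h
  | succ k hk ih => exact ih (alt_step cs w s t k h)

theorem alt_decomp (w : W) (s t : B) (h : cs.length (w * cs.simple t) < cs.length w) :
    ∃ k v, 1 ≤ k ∧ w = v * cs.wordProd (alternatingWord s t k) ∧ cs.length w = cs.length v + k ∧
      cs.length v < cs.length (v * cs.simple s) ∧ cs.length v < cs.length (v * cs.simple t) := by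
  classical
  let P : ℕ → Prop := fun k =>
    ∃ v, w = v * cs.wordProd (alternatingWord s t k) ∧ cs.length w = cs.length v + k
  have hP1 : P 1 := by
    refine ⟨w * cs.simple t, by simp [alternatingWord], ?_⟩
    rcases cs.length_mul_simple w t with h' | h' <;> omega
  have hl1 : 1 ≤ cs.length w := by omega
  have hspec : P (Nat.findGreatest P (cs.length w)) := Nat.findGreatest_spec hl1 hP1
  have hge : 1 ≤ Nat.findGreatest P (cs.length w) := Nat.le_findGreatest hl1 hP1
  have hmax : ∀ k, P k → k ≤ Nat.findGreatest P (cs.length w) := by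
    intro k hk
    obtain ⟨v, _, hv⟩ := id hk
    exact Nat.le_findGreatest (by omega) hk
  generalize Nat.findGreatest P (cs.length w) = k at hspec hge hmax
  obtain ⟨v, hv, hl⟩ := hspec
  have key : ∀ x, (x = s ∨ x = t) → cs.length v < cs.length (v * cs.simple x) := by
    intro x hx
    by_contra hc
    have hx1 : cs.length (v * cs.simple x) + 1 = cs.length v := by
      rcases cs.length_mul_simple v x with h' | h' <;> omega
    by_cases hxn : x = if Even k then t else s
    · have : P (k + 1) := by
        refine ⟨v * cs.simple x, ?_, by omega⟩
        rw [alternatingWord_succ', wordProd_cons, ← hxn, ← mul_assoc,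
          simple_mul_simple_cancel_right]
        exact hv
      have := hmax _ this
      omega
    · obtain ⟨n, rfl⟩ : ∃ n, k = n + 1 := ⟨k - 1, by omega⟩
      have hxn' : x = if Even n then t else s := by
        by_cases he : Even n <;> simp [he, Nat.even_add_one] at hxn ⊢ <;> tauto
      rw [alternatingWord_succ', wordProd_cons, ← hxn', ← mul_assoc] at hv
      have h2 := cs.length_mul_le (v * cs.simple x) (cs.wordProd (alternatingWord s t n))
      have h3 := cs.length_wordProd_le (alternatingWord s t n)
      rw [length_alternatingWord] at h3
      rw [← hv] at h2
      omega
  exact ⟨k, v, hge, hv, hl, key s (Or.inl rfl), key t (Or.inr rfl)⟩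

theorem alt_full (w : W) (s t : B) (hM0 : M s t ≠ 0)
    (h : ∃ v, w = v * cs.wordProd (alternatingWord s t (M s t)) ∧
      cs.length w = cs.length v + M s t) :
    cs.length (w * cs.simple s) < cs.length w := by
  obtain ⟨v, hv, hl⟩ := h
  have hb := cs.wordProd_braidWord_eq s t
  unfold braidWord at hb
  rw [M.symmetric t s] at hb
  rw [hb] at hv
  obtain ⟨n, hn⟩ : ∃ n, M s t = n + 1 := ⟨M s t - 1, by omega⟩
  rw [hn] at hv hl
  rw [alternatingWord_succ, wordProd_concat, ← mul_assoc] at hv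
  have h1 : w * cs.simple s = v * cs.wordProd (alternatingWord s t n) := by
    rw [hv, simple_mul_simple_cancel_right]
  have h2 := cs.length_mul_le v (cs.wordProd (alternatingWord s t n))
  have h3 := cs.length_wordProd_le (alternatingWord s t n)
  rw [length_alternatingWord] at h3
  rw [h1]
  omega

/-- The geometric representation on the free space over the simple roots. -/
structure GeoRep where
  A : B → B → ℝ
  R : W →* Module.End ℝ (B →₀ ℝ)
  diag : ∀ s, A s s = 2
  off : ∀ s t, s ≠ t → ∃ c : ℝ, 0 < c ∧ A s t = -(2 * Real.cos (Real.pi / M s t) * c) ∧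
      A t s = -(2 * Real.cos (Real.pi / M s t) * c⁻¹)
  act : ∀ s t, R (cs.simple s) (Finsupp.single t 1)
    = Finsupp.single t 1 - A s t • Finsupp.single s 1

variable {cs} (G : GeoRep cs)

theorem GeoRep.alt_act (s t : B) (hst : s ≠ t) : ∃ c : ℝ, 0 < c ∧ ∀ k,
    G.R (cs.wordProd (alternatingWord s t k)) (Finsupp.single s 1) =
      if Even k then cheb (Real.cos (Real.pi / M s t)) (k + 1) • Finsupp.single s (1:ℝ)
          + (c * cheb (Real.cos (Real.pi / M s t)) k) • Finsupp.single t (1:ℝ)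
        else cheb (Real.cos (Real.pi / M s t)) k • Finsupp.single s (1:ℝ)
          + (c * cheb (Real.cos (Real.pi / M s t)) (k + 1)) • Finsupp.single t (1:ℝ) := by
  obtain ⟨c, hc, h1, h2⟩ := G.off s t hst
  refine ⟨c⁻¹, inv_pos.2 hc, ?_⟩
  intro k
  induction k with
  | zero => simp [alternatingWord, cheb]
  | succ k ih =>
    rw [alternatingWord_succ', wordProd_cons, map_mul, Module.End.mul_apply, ih]
    by_cases he : Even k
    · have he' : ¬ Even (k + 1) := by simpa [Nat.even_add_one] using he
      simp only [he, he', if_true, if_false, map_add, map_smul, G.act, G.diag, h2, cheb]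
      module
    · have he' : Even (k + 1) := by simpa [Nat.even_add_one] using he
      simp only [he, he', if_true, if_false, map_add, map_smul, G.act, G.diag, h1, cheb]
      have : c⁻¹ * c = 1 := inv_mul_cancel₀ hc.ne'
      match_scalars
      · linear_combination (2 * Real.cos (Real.pi / M s t) *
          cheb (Real.cos (Real.pi / M s t)) (k + 1)) * this
      · ring

theorem GeoRep.alt_nonneg (s t : B) (hst : s ≠ t) (k : ℕ) (hk : M s t ≠ 0 → k < M s t) :
    ∃ x y : ℝ, 0 ≤ x ∧ 0 ≤ y ∧
      G.R (cs.wordProd (alternatingWord s t k)) (Finsupp.single s 1)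
        = x • Finsupp.single s (1:ℝ) + y • Finsupp.single t (1:ℝ) := by
  obtain ⟨c, hc, h⟩ := G.alt_act s t hst
  have h1 := cheb_nonneg (M s t) (M.off_diagonal s t hst) k (fun h => (hk h).le)
  have h2 := cheb_nonneg (M s t) (M.off_diagonal s t hst) (k + 1) (fun h => hk h)
  rw [h]
  split_ifs
  · exact ⟨_, _, h2, mul_nonneg hc.le h1, rfl⟩
  · exact ⟨_, _, h1, mul_nonneg hc.le h2, rfl⟩

theorem GeoRep.tits (n : ℕ) : ∀ (w : W), cs.length w = n → ∀ s,
    cs.length w < cs.length (w * cs.simple s) → 0 ≤ G.R w (Finsupp.single s 1) := by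
  induction n using Nat.strong_induction_on with
  | _ n ih =>
    intro w hw s hs
    by_cases h1 : w = 1
    · subst h1
      simp
    · obtain ⟨t, ht⟩ := cs.exists_rightDescent_of_ne_one h1
      unfold IsRightDescent at ht
      have hst : s ≠ t := by
        rintro rfl
        omega
      obtain ⟨k, v, hk, hv, hl, hvs, hvt⟩ := alt_decomp cs w s t ht
      have hkm : M s t ≠ 0 → k < M s t := by
        intro hM0
        by_contra hc
        have := alt_full cs w s t hM0 (alt_down cs w s t k _ (not_lt.1 hc) ⟨v, hv, hl⟩)
        omega
      obtain ⟨x, y, hx, hy, hxy⟩ := G.alt_nonneg s t hst k hkm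
      have e1 := ih (cs.length v) (by omega) v rfl s hvs
      have e2 := ih (cs.length v) (by omega) v rfl t hvt
      rw [hv, map_mul, Module.End.mul_apply, hxy, map_add, map_smul, map_smul]
      exact add_nonneg (smul_nonneg hx e1) (smul_nonneg hy e2)

theorem GeoRep.tits_neg (w : W) (s : B)
    (h : cs.length (w * cs.simple s) < cs.length w) : G.R w (Finsupp.single s 1) ≤ 0 := by
  have := G.tits _ (w * cs.simple s) rfl s (by rwa [simple_mul_simple_cancel_right])
  rw [map_mul, Module.End.mul_apply, G.act, G.diag, map_sub, map_smul] at this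
  have e : G.R w (Finsupp.single s 1) - (2 : ℝ) • G.R w (Finsupp.single s 1)
      = - G.R w (Finsupp.single s 1) := by module
  rw [e] at this
  exact neg_nonneg.1 this

theorem GeoRep.inv_apply (w : W) (x : B →₀ ℝ) : G.R w⁻¹ (G.R w x) = x := by
  rw [← Module.End.mul_apply, ← map_mul, inv_mul_cancel, map_one, Module.End.one_apply]

theorem GeoRep.apply_inv (w : W) (x : B →₀ ℝ) : G.R w (G.R w⁻¹ x) = x := by
  rw [← Module.End.mul_apply, ← map_mul, mul_inv_cancel, map_one, Module.End.one_apply]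

theorem GeoRep.apply_ne (w : W) (s : B) : G.R w (Finsupp.single s 1) ≠ 0 := by
  intro h
  have := G.inv_apply w (Finsupp.single s 1)
  rw [h, map_zero] at this
  have h2 := DFunLike.congr_fun this s
  simp at h2

theorem GeoRep.two_descents (G : GeoRep cs) (w : W) (s t : B) (hst : s ≠ t)
    (hs : cs.length (w * cs.simple s) < cs.length w)
    (ht : cs.length (w * cs.simple t) < cs.length w) :
    M s t ≠ 0 ∧ ∃ v, w = v * cs.wordProd (alternatingWord s t (M s t)) ∧
      cs.length w = cs.length v + M s t := by
  obtain ⟨k, v, hk, hv, hl, hvs, hvt⟩ := alt_decomp cs w s t ht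
  by_cases hkm : M s t ≠ 0 → k < M s t
  · exfalso
    obtain ⟨x, y, hx, hy, hxy⟩ := G.alt_nonneg s t hst k hkm
    have e1 := G.tits _ v rfl s hvs
    have e2 := G.tits _ v rfl t hvt
    have e3 := G.tits_neg w s hs
    apply G.apply_ne w s
    apply le_antisymm e3
    rw [hv, map_mul, Module.End.mul_apply, hxy, map_add, map_smul, map_smul]
    exact add_nonneg (smul_nonneg hx e1) (smul_nonneg hy e2)
  · push Not at hkm
    exact ⟨hkm.1, alt_down cs w s t k _ hkm.2 ⟨v, hv, hl⟩⟩

theorem GeoRep.matsumoto (G : GeoRep cs) {N : Type*} [Monoid N] (F : B → N)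
    (hF : ∀ s t, s ≠ t → M s t ≠ 0 → ((alternatingWord s t (M s t)).map F).prod
      = ((alternatingWord t s (M s t)).map F).prod) (n : ℕ) :
    ∀ l₁ l₂ : List B, l₁.length = n → cs.IsReduced l₁ → cs.IsReduced l₂ →
      cs.wordProd l₁ = cs.wordProd l₂ → (l₁.map F).prod = (l₂.map F).prod := by
  induction n with
  | zero =>
    intro l₁ l₂ hn h1 h2 h
    have : l₂.length = 0 := by rw [← h2.eq, ← h, h1.eq, hn]
    rw [List.length_eq_zero_iff.1 hn, List.length_eq_zero_iff.1 this]
  | succ n ih =>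
    intro l₁ l₂ hn h1 h2 h
    have hn2 : l₂.length = n + 1 := by rw [← h2.eq, ← h, h1.eq, hn]
    obtain ⟨l₁', s, rfl⟩ := List.eq_nil_or_concat l₁ |>.resolve_left (by rintro rfl; simp at hn)
    obtain ⟨l₂', t, rfl⟩ := List.eq_nil_or_concat l₂ |>.resolve_left (by rintro rfl; simp at hn2)
    have red : ∀ (l : List B) (x : B), cs.IsReduced (l.concat x) → cs.IsReduced l := by
      intro l x hl
      have := hl.take l.length
      simpa using this
    rw [List.length_concat] at hn hn2
    have r1 := red _ _ h1
    have r2 := red _ _ h2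
    have descent : ∀ (l : List B) (x : B), cs.IsReduced (l.concat x) →
        cs.length (cs.wordProd (l.concat x) * cs.simple x) < cs.length (cs.wordProd (l.concat x)) := by
      intro l x hl
      rw [hl.eq, wordProd_concat, simple_mul_simple_cancel_right, (red l x hl).eq]
      simp
    by_cases hst : s = t
    · subst hst
      have : cs.wordProd l₁' = cs.wordProd l₂' := by
        rw [wordProd_concat, wordProd_concat] at h
        exact mul_right_cancel h
      simp [ih l₁' l₂' (by omega) r1 r2 this]
    · have d1 := descent _ _ h1
      have d2 := descent _ _ h2
      rw [← h] at d2
      obtain ⟨hM0, v, hv, hl⟩ := G.two_descents _ s t hst d1 d2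
      obtain ⟨q, hq, hqv⟩ := cs.exists_isReduced v
      obtain ⟨m, hm⟩ : ∃ m, M s t = m + 1 := ⟨M s t - 1, by omega⟩
      have hbr := cs.wordProd_braidWord_eq s t
      unfold braidWord at hbr
      rw [M.symmetric t s] at hbr
      have hF' := hF s t hst hM0
      rw [hm] at hv hl hbr hF'
      rw [h1.eq, List.length_concat, hqv, hq.eq] at hl
      have cmp : ∀ (l : List B) (x y : B), cs.IsReduced l → l.length = n →
          cs.wordProd (l.concat x) = v * cs.wordProd (alternatingWord y x (m + 1)) →
          ((l.concat x).map F).prod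
            = (q.map F).prod * ((alternatingWord y x (m + 1)).map F).prod := by
        intro l x y hl' hln hprod
        rw [alternatingWord_succ, wordProd_concat, wordProd_concat, ← mul_assoc] at hprod
        have hp := mul_right_cancel hprod
        rw [hqv, ← wordProd_append] at hp
        have hlen : (q ++ alternatingWord x y m).length = n := by
          rw [List.length_append, length_alternatingWord]
          omega
        have := ih l (q ++ alternatingWord x y m) hln hl' (by
          unfold CoxeterSystem.IsReduced
          rw [← hp, hl'.eq, hln, hlen]) hp
        rw [alternatingWord_succ]
        simp only [List.concat_eq_append, List.map_append, List.prod_append] at this ⊢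
        rw [this, mul_assoc]
      rw [cmp l₁' s t r1 (by omega) (by rw [hv, hbr]),
        cmp l₂' t s r2 (by omega) (by rw [← h, hv]), hF']

end PitmanAux

namespace PitmanAux

open CoxeterSystem

theorem exists_geoRep {V : Type*} [AddCommGroup V] [Module ℝ V]
    {B W : Type*} [Group W] {M : CoxeterMatrix B} (cs : CoxeterSystem M W)
    (α : B → V) (αv : B → Module.Dual ℝ V)
    (hpair : ∀ s, αv s (α s) = 2)
    (ρ : W →* (V ≃ₗ[ℝ] V))
    (hρs : ∀ s v, ρ (cs.simple s) v = v - αv s v • α s)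
    (hM : ∀ s s' : B, s ≠ s' →
      (M s s' = 2 ∧ αv s (α s') = 0 ∧ αv s' (α s) = 0) ∨
      (αv s (α s') < 0 ∧ αv s' (α s) < 0 ∧
        αv s (α s') * αv s' (α s) = 4 * Real.cos (Real.pi / (M s s' : ℝ)) ^ 2)) :
    ∃ G : GeoRep cs, ∀ w x, Finsupp.linearCombination ℝ α (G.R w x)
      = ρ w (Finsupp.linearCombination ℝ α x) := by
  set φ := Finsupp.linearCombination ℝ α with hφ
  have hφ1 : ∀ s, φ (Finsupp.single s 1) = α s := by
    intro s
    simp [hφ]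
  let f : B → Module.End ℝ (B →₀ ℝ) := fun s =>
    LinearMap.id - (αv s ∘ₗ φ).smulRight (Finsupp.single s 1)
  have hf : ∀ s x, f s x = x - αv s (φ x) • Finsupp.single s 1 := by
    intro s x
    simp [f]
  have hfφ : ∀ s x, φ (f s x) = ρ (cs.simple s) (φ x) := by
    intro s x
    rw [hf, hρs, map_sub, map_smul, hφ1]
  have hlift : M.IsLiftable f := by
    intro i j
    by_cases hij : i = j
    · subst hij
      rw [M.diagonal, pow_one]
      apply LinearMap.ext
      intro x
      rw [Module.End.mul_apply, hf, hf, Module.End.one_apply]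
      simp only [map_sub, map_smul, hφ1, smul_eq_mul, hpair]
      module
    · by_cases hM0 : M i j = 0
      · rw [hM0, pow_zero]
      have hM1 := M.off_diagonal i j hij
      apply LinearMap.ext
      intro x
      rw [Module.End.one_apply]
      have h1 : ∀ n : ℕ, ∃ a b : ℝ, ((f i * f j) ^ n) x
          = x + a • Finsupp.single i 1 + b • Finsupp.single j 1 := by
        intro n
        induction n with
        | zero => exact ⟨0, 0, by simp⟩
        | succ n ih =>
          obtain ⟨a, b, h⟩ := ih
          rw [pow_succ', Module.End.mul_apply, h, Module.End.mul_apply, hf j, hf i]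
          generalize αv i (φ _) = p
          generalize αv j (φ _) = q
          exact ⟨a - p, b - q, by module⟩
      have h2 : ∀ n : ℕ, φ (((f i * f j) ^ n) x) = ρ ((cs.simple i * cs.simple j) ^ n) (φ x) := by
        intro n
        induction n with
        | zero => simp
        | succ n ih =>
          rw [pow_succ', Module.End.mul_apply, Module.End.mul_apply, hfφ, hfφ, ih, pow_succ',
            map_mul, map_mul]
          rfl
      obtain ⟨a, b, hab⟩ := h1 (M i j)
      have h3 := h2 (M i j)
      rw [simple_mul_simple_pow, map_one, hab, map_add, map_add, map_smul, map_smul, hφ1, hφ1] at h3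
      have h4 : a • α i + b • α j = 0 := by
        have h3' : φ x + a • α i + b • α j = φ x := h3
        rw [add_assoc] at h3'
        exact add_eq_left.1 h3'
      have e1 := congrArg (αv i) h4
      have e2 := congrArg (αv j) h4
      simp only [map_add, map_smul, smul_eq_mul, hpair, map_zero] at e1 e2
      have hlt : αv i (α j) * αv j (α i) < 4 := by
        rcases hM i j hij with ⟨_, h, _⟩ | ⟨_, _, h⟩
        · rw [h]
          norm_num
        · rw [h]
          have hm2 : (2 : ℝ) ≤ M i j := by exact_mod_cast (by omega : 2 ≤ M i j)
          have hs : 0 < Real.sin (Real.pi / M i j) := by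
            apply Real.sin_pos_of_pos_of_lt_pi (by positivity)
            rw [div_lt_iff₀ (by linarith)]
            nlinarith [Real.pi_pos]
          nlinarith [Real.sin_sq_add_cos_sq (Real.pi / M i j)]
      have ha : a = 0 := by
        have : (4 - αv i (α j) * αv j (α i)) * a = 0 := by
          linear_combination 2 * e1 - αv i (α j) * e2
        rcases mul_eq_zero.1 this with h | h
        · linarith
        · exact h
      have hb : b = 0 := by
        rw [ha] at e2
        linarith
      rw [hab, ha, hb]
      simp
  refine ⟨⟨fun s t => αv s (α t), cs.lift ⟨f, hlift⟩, hpair, ?_, ?_⟩, ?_⟩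
  · intro s t hst
    exact pair_scale (M s t) (M.off_diagonal s t hst) _ _ (hM s t hst)
  · intro s t
    rw [lift_apply_simple, hf, hφ1]
  · intro w
    induction w using cs.simple_induction_left with
    | one => simp
    | mul_simple_left w i ih =>
      intro x
      rw [map_mul, Module.End.mul_apply]
      simp only [lift_apply_simple] at ih ⊢
      rw [hfφ, ih, map_mul]
      rfl

theorem GeoRep.nonpos {B W : Type*} [Group W] {M : CoxeterMatrix B} {cs : CoxeterSystem M W}
    (G : GeoRep cs) (w : W) (hw : ∀ w', cs.length w' ≤ cs.length w) (x : B →₀ ℝ) (hx : 0 ≤ x) :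
    G.R w x ≤ 0 := by
  have h : ∀ s, G.R w (Finsupp.single s 1) ≤ 0 := fun s =>
    G.tits_neg w s (lt_of_le_of_ne (hw _) (cs.length_mul_simple_ne w s))
  have e : x = x.sum fun s a => a • Finsupp.single s (1:ℝ) := by
    simp
  rw [e, map_finsuppSum, Finsupp.sum]
  apply Finset.sum_nonpos
  intro s _
  rw [map_smul]
  exact smul_nonpos_of_nonneg_of_nonpos (hx s) (h s)

theorem GeoRep.star {B W : Type*} [Group W] {M : CoxeterMatrix B} {cs : CoxeterSystem M W}
    (G : GeoRep cs) (w : W) (hw : ∀ w', cs.length w' ≤ cs.length w) (s : B) :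
    ∃ (t : B) (c : ℝ), 0 < c ∧ G.R w (Finsupp.single s 1) = -(c • Finsupp.single t (1:ℝ)) := by
  classical
  have hw' : ∀ w', cs.length w' ≤ cs.length w⁻¹ := by
    intro w'
    rw [length_inv]
    exact hw w'
  have hy0 : 0 ≤ -G.R w (Finsupp.single s 1) :=
    neg_nonneg.2 (G.nonpos w hw _ (Finsupp.single_nonneg.2 zero_le_one))
  have hyne : -G.R w (Finsupp.single s 1) ≠ 0 := neg_ne_zero.2 (G.apply_ne w s)
  set y := -G.R w (Finsupp.single s 1) with hy
  obtain ⟨t, ht⟩ := Finsupp.ne_iff.1 hyne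
  have htpos : 0 < y t := lt_of_le_of_ne (hy0 t) (Ne.symm ht)
  have hle : 0 ≤ y - y t • Finsupp.single t (1:ℝ) := by
    intro u
    by_cases hu : u = t
    · subst hu
      simp
    · simpa [Finsupp.single_apply, Ne.symm hu] using hy0 u
  have h1 := G.nonpos w⁻¹ hw' _ hle
  have h2 := G.nonpos w⁻¹ hw' (Finsupp.single t 1) (Finsupp.single_nonneg.2 zero_le_one)
  have h3 : G.R w⁻¹ y = -Finsupp.single s 1 := by
    rw [hy, map_neg, G.inv_apply]
  rw [map_sub, map_smul, h3] at h1
  set z := G.R w⁻¹ (Finsupp.single t 1) with hz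
  have hzs : z = z s • Finsupp.single s (1:ℝ) := by
    ext u
    by_cases hu : u = s
    · subst hu
      simp
    · have a1 := h1 u
      have a2 := h2 u
      simp [Finsupp.single_apply, Ne.symm hu] at a1 a2 ⊢
      nlinarith
  have hzne : z ≠ 0 := G.apply_ne w⁻¹ t
  have hzsne : z s ≠ 0 := by
    intro h
    rw [h, zero_smul] at hzs
    exact hzne hzs
  have hzneg : z s < 0 := lt_of_le_of_ne (h2 s) hzsne
  refine ⟨t, -(z s)⁻¹, neg_pos.2 (inv_lt_zero.2 hzneg), ?_⟩
  have h4 := G.apply_inv w (Finsupp.single t 1)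
  rw [← hz, hzs, map_smul] at h4
  rw [← h4, smul_smul, neg_mul, inv_mul_cancel₀ hzsne]
  simp

theorem star_V {V : Type*} [AddCommGroup V] [Module ℝ V]
    {B W : Type*} [Group W] [Finite W] {M : CoxeterMatrix B} (cs : CoxeterSystem M W)
    (α : B → V) (αv : B → Module.Dual ℝ V)
    (hpair : ∀ s, αv s (α s) = 2)
    (ρ : W →* (V ≃ₗ[ℝ] V)) (hρinj : Function.Injective ρ)
    (hρs : ∀ s v, ρ (cs.simple s) v = v - αv s v • α s)
    (w : W) (s t : B) (c : ℝ) (hc : 0 < c) (h : ρ w (α s) = -(c • α t)) :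
    w * cs.simple s * w⁻¹ = cs.simple t ∧ ∀ v, αv t (ρ w v) = -(c * αv s v) := by
  have hinv : ∀ x, ρ w (ρ w⁻¹ x) = x := by
    intro x
    have : (ρ w * ρ w⁻¹) x = x := by rw [← map_mul, mul_inv_cancel, map_one]; rfl
    exact this
  have hinv' : ∀ x, ρ w⁻¹ (ρ w x) = x := by
    intro x
    have : (ρ w⁻¹ * ρ w) x = x := by rw [← map_mul, inv_mul_cancel, map_one]; rfl
    exact this
  set u := cs.simple t * (w * cs.simple s * w⁻¹) with hu
  let ν : V → ℝ := fun x => αv t x + c * αv s (ρ w⁻¹ x)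
  have hνadd : ∀ (x : V) (a : ℝ), ν (x - a • α t) = ν x := by
    intro x a
    have e : ρ w⁻¹ (α t) = -(c⁻¹ • α s) := by
      have := hinv' (α s)
      rw [h, map_neg, map_smul] at this
      rw [← this, smul_neg, smul_smul, inv_mul_cancel₀ hc.ne']
      simp
    simp only [ν, map_sub, map_smul, e, map_neg, hpair, smul_eq_mul]
    field_simp
    ring
  have hu1 : ∀ x, ρ u x = x - ν x • α t := by
    intro x
    have e : ρ u x = ρ (cs.simple t) (ρ w (ρ (cs.simple s) (ρ w⁻¹ x))) := by
      rw [hu]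
      simp only [map_mul]
      rfl
    rw [e, hρs s, map_sub, map_smul, hinv, h, hρs]
    simp only [map_sub, map_smul, map_neg, hpair, smul_eq_mul, ν]
    module
  have hun : ∀ (n : ℕ) x, ρ (u ^ n) x = x - ((n : ℝ) * ν x) • α t := by
    intro n
    induction n with
    | zero => intro x; simp
    | succ n ih =>
      intro x
      have e : ρ (u ^ (n + 1)) x = ρ u (ρ (u ^ n) x) := by
        rw [pow_succ', map_mul]
        rfl
      rw [e, ih, hu1, hνadd]
      push_cast
      module
  have hαt : α t ≠ 0 := by
    intro h0
    have := hpair t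
    rw [h0, map_zero] at this
    norm_num at this
  have hν : ∀ x, ν x = 0 := by
    intro x
    have h1 := hun (orderOf u) x
    rw [pow_orderOf_eq_one, map_one] at h1
    have h2 : x = x - ((orderOf u : ℝ) * ν x) • α t := h1
    have h3 : ((orderOf u : ℝ) * ν x) • α t = 0 := by
      have := sub_eq_self.1 h2.symm
      exact this
    rcases smul_eq_zero.1 h3 with h4 | h4
    · rcases mul_eq_zero.1 h4 with h5 | h5
      · exact absurd (by exact_mod_cast h5) (orderOf_pos u).ne'
      · exact h5
    · exact absurd h4 hαt
  constructor
  · have hu_one : u = 1 := by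
      apply hρinj
      ext x
      rw [hu1, hν, map_one]
      simp
    rw [hu] at hu_one
    rw [← cs.inv_simple t]
    exact (inv_eq_of_mul_eq_one_right hu_one).symm
  · intro v
    have := hν (ρ w v)
    simp only [ν, hinv'] at this
    linarith

theorem pitmanWord_congr {V : Type*} [AddCommGroup V] [Module ℝ V] {B : Type*}
    (α : B → V) (αv : B → Module.Dual ℝ V) (l : List B) (T : ℝ) (π π' : ℝ → V)
    (h : ∀ u ∈ Set.Icc 0 T, π u = π' u) :
    ∀ u ∈ Set.Icc 0 T, pitmanWord α αv l π u = pitmanWord α αv l π' u := by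
  induction l with
  | nil => exact h
  | cons x l ih =>
    intro u hu
    show pitman (α x) (αv x) (pitmanWord α αv l π) u = pitman (α x) (αv x) (pitmanWord α αv l π') u
    unfold pitman
    rw [ih u hu]
    congr 3
    apply Set.image_congr
    intro s hs
    rw [ih s ⟨hs.1, hs.2.trans hu.2⟩]

theorem pitmanWord_star {V : Type*} [AddCommGroup V] [Module ℝ V] {B : Type*}
    (α : B → V) (αv : B → Module.Dual ℝ V) (g : V ≃ₗ[ℝ] V) (st : B → B) (c : B → ℝ)
    (hc : ∀ s, 0 < c s) (h1 : ∀ s, g (α s) = -(c s • α (st s)))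
    (h2 : ∀ s v, αv (st s) (g v) = -(c s * αv s v)) (l : List B) (π : ℝ → V) :
    (fun t => -(g (pitmanWord α αv l π t)))
      = pitmanWord α αv (l.map st) (fun t => -(g (π t))) := by
  induction l with
  | nil => rfl
  | cons x l ih =>
    show (fun t => -(g (pitman (α x) (αv x) (pitmanWord α αv l π) t)))
      = pitman (α (st x)) (αv (st x)) (pitmanWord α αv (l.map st) (fun t => -(g (π t))))
    rw [← ih]
    funext t
    simp only [pitman_eq_rinf, map_sub, map_smul, map_neg, h1, h2, neg_neg]
    rw [rinf_mul (hc x).le]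
    module

end PitmanAux
/-- Lemma 4.5 of Biane–Bougerol–O'Connell: `(−w₀) ∘ P_{w₀} = P_{w₀} ∘ (−w₀)` as
transformations of continuous paths starting at `0`, where `w₀` is the longest element
of the finite Coxeter group `W` acting on `V` via the reflection representation `ρ`,
and `P_{w₀}` is computed along arbitrary reduced words `l₁`, `l₂` for `w₀`. -/
theorem pitmanWord_neg_w0_commute
    {V : Type*} [NormedAddCommGroup V] [NormedSpace ℝ V] [FiniteDimensional ℝ V]
    (T : ℝ) (hT : 0 < T)
    {B : Type*} [Fintype B] {W : Type*} [Group W] [Finite W]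
    (M : CoxeterMatrix B) (cs : CoxeterSystem M W)
    (α : B → V) (αv : B → Module.Dual ℝ V)
    (hpair : ∀ s, αv s (α s) = 2)
    (ρ : W →* (V ≃ₗ[ℝ] V)) (hρinj : Function.Injective ρ)
    (hρs : ∀ s v, ρ (cs.simple s) v = v - αv s v • α s)
    (hM : ∀ s s' : B, s ≠ s' →
      (M s s' = 2 ∧ αv s (α s') = 0 ∧ αv s' (α s) = 0) ∨
      (αv s (α s') < 0 ∧ αv s' (α s) < 0 ∧
        αv s (α s') * αv s' (α s) = 4 * Real.cos (Real.pi / (M s s' : ℝ)) ^ 2))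
    (w₀ : W) (hw₀ : ∀ w : W, cs.length w ≤ cs.length w₀)
    (l₁ l₂ : List B) (hl₁ : cs.wordProd l₁ = w₀) (hl₁red : cs.IsReduced l₁)
    (hl₂ : cs.wordProd l₂ = w₀) (hl₂red : cs.IsReduced l₂)
    (π : ℝ → V) (hcont : ContinuousOn π (Set.Icc 0 T)) (h0 : π 0 = 0) :
    ∀ t ∈ Set.Icc 0 T,
      -(ρ w₀ (pitmanWord α αv l₁ π t))
        = pitmanWord α αv l₂ (fun u => -(ρ w₀ (π u))) t := by
  classical
  obtain ⟨G, hG⟩ := PitmanAux.exists_geoRep cs α αv hpair ρ hρs hM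
  choose st c hc hst using G.star w₀ hw₀
  have h1 : ∀ s, ρ w₀ (α s) = -(c s • α (st s)) := by
    intro s
    have := hG w₀ (Finsupp.single s 1)
    rw [hst] at this
    simpa using this.symm
  have hstar := fun s => PitmanAux.star_V cs α αv hpair ρ hρinj hρs w₀ s (st s) (c s) (hc s) (h1 s)
  have hword : ∀ l : List B, cs.wordProd (l.map st) = w₀ * cs.wordProd l * w₀⁻¹ := by
    intro l
    induction l with
    | nil => simp
    | cons x l ih =>
      rw [List.map_cons, cs.wordProd_cons, cs.wordProd_cons, ih, ← (hstar x).1]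
      group
  have hw : cs.wordProd (l₁.map st) = w₀ := by
    rw [hword, hl₁]
    group
  have hred : cs.IsReduced (l₁.map st) := by
    unfold CoxeterSystem.IsReduced
    rw [hw, List.length_map, ← hl₁red.eq, hl₁]
  -- extend the path to the whole line
  set π' : ℝ → V := fun u => π (Set.projIcc 0 T hT.le u) with hπ'
  have hπ'c : Continuous π' := by
    have := continuousOn_iff_continuous_restrict.1 hcont
    exact this.comp continuous_projIcc
  have hπ'0 : π' 0 = 0 := by
    simp only [hπ', Set.projIcc_left, h0]
  have hagree : ∀ u ∈ Set.Icc 0 T, π u = π' u := by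
    intro u hu
    simp only [hπ', Set.projIcc_of_mem hT.le hu]
  have hpath : PitmanAux.Path0 (fun u => -(ρ w₀ (π' u))) := by
    intro f
    refine ⟨?_, by simp [hπ'0]⟩
    have e : (fun s => f (-(ρ w₀ (π' s)))) = fun s => (-(f ∘ₗ (ρ w₀).toLinearMap)) (π' s) := by
      funext s
      simp
    rw [e]
    exact (LinearMap.continuous_of_finiteDimensional (-(f ∘ₗ (ρ w₀).toLinearMap))).comp hπ'c
  let X := {p : ℝ → V // PitmanAux.Path0 p}
  let F : B → Function.End X := fun s p =>
    ⟨pitman (α s) (αv s) p.1, PitmanAux.Path0_pitman (α s) (αv s) p.2⟩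
  have hFl : ∀ (l : List B) (p : X), ((l.map F).prod p).1 = pitmanWord α αv l p.1 := by
    intro l p
    induction l with
    | nil => rfl
    | cons x l ih =>
      rw [List.map_cons, List.prod_cons]
      show pitman (α x) (αv x) ((l.map F).prod p).1 = _
      rw [ih]
      rfl
  have hF : ∀ s t, s ≠ t → M s t ≠ 0 →
      ((CoxeterSystem.alternatingWord s t (M s t)).map F).prod
        = ((CoxeterSystem.alternatingWord t s (M s t)).map F).prod := by
    intro s t hne hM0
    have hM1 := M.off_diagonal s t hne
    obtain ⟨d, hd, e1, e2⟩ := PitmanAux.pair_scale (M s t) hM1 _ _ (hM s t hne)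
    funext p
    apply Subtype.ext
    rw [hFl, hFl]
    exact PitmanAux.pitman_braid α αv (Real.cos (Real.pi / M s t)) (M s t) (by omega)
      (fun i hi => PitmanAux.cheb_nonneg (M s t) hM1 i (fun _ => hi))
      (PitmanAux.cheb_top (M s t) (by omega)) s t hne (hpair s) (hpair t) d hd e1 e2 p.1 p.2
  have hmat := G.matsumoto F hF _ (l₁.map st) l₂ rfl hred hl₂red (by rw [hw, hl₂])
  have hmain : pitmanWord α αv (l₁.map st) (fun u => -(ρ w₀ (π' u)))
      = pitmanWord α αv l₂ (fun u => -(ρ w₀ (π' u))) := by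
    rw [← hFl _ ⟨_, hpath⟩, ← hFl _ ⟨_, hpath⟩, hmat]
  intro t ht
  rw [PitmanAux.pitmanWord_congr α αv l₁ T π π' hagree t ht]
  rw [PitmanAux.pitmanWord_congr α αv l₂ T (fun u => -(ρ w₀ (π u))) (fun u => -(ρ w₀ (π' u)))
    (fun u hu => by rw [hagree u hu]) t ht]
  rw [← hmain]
  exact congrFun (PitmanAux.pitmanWord_star α αv (ρ w₀) st c hc h1 (fun s => (hstar s).2) l₁ π') t
end

section
/- Generalized Schützenberger involution: in the Coxeter setting below, assume W is finite with longest element w_0, and define the transformation I = P_{w_0} ∘ (−w_0) ∘ κ on continuous paths π : [0,T] → V with π(0) = 0, i.e. Iπ = P_{w_0}(η) where η(t) = −w_0( π(T−t) − π(T) ). Then: (i) I ∘ I = P_{w_0}; (ii) for every dominant path π, I(Iπ) = π (so the restriction of I to dominant paths is an involution); (iii) I ∘ P_{w_0} = I; (iv) for every path π, (Iπ)(T) = (P_{w_0}π)(T); in particular (Iπ)(T) = π(T) when π is dominant. -/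
/-- The generalized Schützenberger involution `I = P_{w₀} ∘ (−w₀) ∘ κ`, where
`κ π (t) = π (T − t) − π T` is path reversal, `g` is the action of `w₀` on `V`, and
`P_{w₀}` is computed along the word `l`. -/
noncomputable def schuetz {V : Type*} [AddCommGroup V] [Module ℝ V] {B : Type*}
    (T : ℝ) (α : B → V) (αv : B → Module.Dual ℝ V) (l : List B) (g : V → V)
    (π : ℝ → V) : ℝ → V :=
  pitmanWord α αv l (fun t => -(g (π (T - t) - π T)))

set_option linter.unusedSectionVars false

namespace PitAux

/-- running infimum -/
noncomputable def R (f : ℝ → ℝ) : ℝ → ℝ := fun t => sInf (f '' Set.Icc 0 t)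

/-- continuous functions vanishing at zero -/
def Good (f : ℝ → ℝ) : Prop := Continuous f ∧ f 0 = 0

theorem R_eq {f : ℝ → ℝ} (hf : f 0 = 0) (t : ℝ) :
    R f t = sInf ((fun u => f (u * max t 0)) '' Set.Icc (0:ℝ) 1) := by
  unfold R
  rcases lt_or_ge t 0 with h | h
  · rw [Set.Icc_eq_empty (by linarith), max_eq_right h.le]
    have : (fun u : ℝ => f (u * 0)) = fun _ => 0 := by funext u; simp [hf]
    rw [this, Set.image_empty, Set.Nonempty.image_const ⟨0, by simp⟩]
    simp
  · rw [max_eq_left h]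
    congr 1
    ext y
    constructor
    · rintro ⟨s, hs, rfl⟩
      rcases h.eq_or_lt with h0 | h0
      · subst h0
        have : s = 0 := le_antisymm hs.2 hs.1
        exact ⟨0, by simp, by simp [this]⟩
      · refine ⟨s / t, ⟨div_nonneg hs.1 h, (div_le_one h0).2 hs.2⟩, ?_⟩
        simp only
        rw [div_mul_cancel₀ _ h0.ne']
    · rintro ⟨u, hu, rfl⟩
      exact ⟨u * t, ⟨mul_nonneg hu.1 h, by nlinarith [hu.2]⟩, rfl⟩

theorem Good.R {f : ℝ → ℝ} (hf : Good f) : Good (R f) := by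
  constructor
  · have : PitAux.R f = fun t => sInf ((fun u => f (u * max t 0)) '' Set.Icc (0:ℝ) 1) := by
      funext t; exact R_eq hf.2 t
    rw [this]
    apply IsCompact.continuous_sInf (f := fun t u => f (u * max t 0)) isCompact_Icc
    have := hf.1
    simp only [Function.HasUncurry.uncurry, id]
    fun_prop
  · unfold PitAux.R; simp [hf.2]

theorem Good.add {f g : ℝ → ℝ} (hf : Good f) (hg : Good g) : Good (fun t => f t + g t) :=
  ⟨hf.1.add hg.1, by simp [hf.2, hg.2]⟩

theorem Good.sub {f g : ℝ → ℝ} (hf : Good f) (hg : Good g) : Good (fun t => f t - g t) :=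
  ⟨hf.1.sub hg.1, by simp [hf.2, hg.2]⟩

theorem Good.smul {f : ℝ → ℝ} (c : ℝ) (hf : Good f) : Good (fun t => c * f t) :=
  ⟨continuous_const.mul hf.1, by simp [hf.2]⟩

theorem Good.zero : Good (fun _ => 0) := ⟨continuous_const, rfl⟩

theorem R_le {f : ℝ → ℝ} (hf : Continuous f) {s t : ℝ} (h0 : 0 ≤ s) (h : s ≤ t) :
    R f t ≤ f s :=
  csInf_le (isCompact_Icc.image hf).bddBelow ⟨s, ⟨h0, h⟩, rfl⟩

theorem R_attain {f : ℝ → ℝ} (hf : Continuous f) {t : ℝ} (h : 0 ≤ t) :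
    ∃ s, 0 ≤ s ∧ s ≤ t ∧ R f t = f s := by
  obtain ⟨s, hs, h⟩ := (isCompact_Icc.image hf).sInf_mem
    ((Set.nonempty_Icc.2 h).image f)
  exact ⟨s, hs.1, hs.2, h.symm⟩

theorem le_R {f : ℝ → ℝ} (hf : Continuous f) {t c : ℝ} (h : 0 ≤ t)
    (hc : ∀ s, 0 ≤ s → s ≤ t → c ≤ f s) : c ≤ R f t := by
  obtain ⟨s, h1, h2, h3⟩ := R_attain hf h
  rw [h3]; exact hc s h1 h2

theorem R_neg {f : ℝ → ℝ} {t : ℝ} (h : t < 0) : R f t = 0 := by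
  unfold R; rw [Set.Icc_eq_empty (by linarith)]; simp

theorem R_anti {f : ℝ → ℝ} (hf : Continuous f) {s t : ℝ} (h0 : 0 ≤ s) (h : s ≤ t) :
    R f t ≤ R f s := by
  apply le_R hf h0
  intro r h1 h2
  exact R_le hf h1 (h2.trans h)

open scoped Pointwise in
theorem R_mul (f : ℝ → ℝ) {c : ℝ} (hc : 0 ≤ c) : R (fun t => c * f t) = fun t => c * R f t := by
  funext t
  unfold R
  have : ((fun t => c * f t) '' Set.Icc 0 t) = c • (f '' Set.Icc 0 t) := by
    ext y; simp [Set.mem_smul_set]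
  rw [this, Real.sInf_smul_of_nonneg hc, smul_eq_mul]

theorem oneA {x : ℝ → ℝ} (hx : Continuous x) {a b s : ℝ} (ha : 0 ≤ a) (h1 : a ≤ s) (h2 : s ≤ b) :
    ∃ r, a ≤ r ∧ r ≤ b ∧ x r ≤ x s - 2 * R x s + R x a + R x b := by
  have e1 := R_anti hx ha h1
  have e2 := R_anti hx (ha.trans h1) h2
  rcases (e2.trans e1).eq_or_lt with h | h
  · exact ⟨s, h1, h2, by linarith⟩
  · obtain ⟨r, r1, r2, r3⟩ := R_attain hx (ha.trans (h1.trans h2))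
    have : a ≤ r := by
      by_contra hc
      have := R_le hx r1 (le_of_not_ge hc)
      linarith
    refine ⟨r, this, r2, ?_⟩
    have := R_le hx (ha.trans h1) le_rfl
    linarith

theorem oneB {x : ℝ → ℝ} (hx : Continuous x) {a b r : ℝ} (ha : 0 ≤ a) (h1 : a ≤ r) (h2 : r ≤ b) :
    ∃ s, a ≤ s ∧ s ≤ b ∧ x s - 2 * R x s + R x a + R x b ≤ x r := by
  have e1 := R_anti hx ha h1
  have e2 := R_anti hx (ha.trans h1) h2
  rcases (e2.trans e1).eq_or_lt with h | h
  · exact ⟨r, h1, h2, by linarith⟩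
  · obtain ⟨r0, r1, r2, r3⟩ := R_attain hx (ha.trans (h1.trans h2))
    have har : a ≤ r0 := by
      by_contra hc
      have := R_le hx r1 (le_of_not_ge hc)
      linarith
    have hK : IsCompact (Set.Icc a b ∩ {s | x s ≤ R x a}) :=
      isCompact_Icc.inter_right (isClosed_le hx continuous_const)
    obtain ⟨s, hs, hmin⟩ := hK.exists_isLeast ⟨r0, ⟨har, r2⟩, by change x r0 ≤ R x a; linarith⟩
    have hxa := R_le hx ha le_rfl
    obtain ⟨s1, hs1, hs1'⟩ := intermediate_value_Icc' hs.1.1 hx.continuousOn ⟨hs.2, hxa⟩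
    have : s ≤ s1 := hmin ⟨⟨hs1.1, hs1.2.trans hs.1.2⟩, hs1'.le⟩
    have hs1s : s1 = s := le_antisymm hs1.2 this
    subst hs1s
    have hR : R x a ≤ R x s1 := by
      apply le_R hx (ha.trans hs1.1)
      intro q q1 q2
      rcases le_total q a with hq | hq
      · exact R_le hx q1 hq
      · by_contra hc
        have := hmin ⟨⟨hq, q2.trans hs.1.2⟩, (not_le.1 hc).le⟩
        have : q = s1 := le_antisymm q2 this
        subst this
        linarith
    refine ⟨s1, hs1.1, hs.1.2, ?_⟩
    have := R_le hx (ha.trans h1) h2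
    linarith

theorem twoStep {x Φ : ℝ → ℝ} (hx : Good x) (hΦ : Good Φ) {c : ℝ} (hc : 0 ≤ c) (b : ℝ) :
    R (fun s => c * (x s - 2 * R x s) + R (fun a => Φ a + c * R x a) s) b
      = R (fun s => c * x s + R Φ s) b - c * R x b := by
  have gI := hx.R
  have g1 : Good (fun a => Φ a + c * R x a) := hΦ.add (gI.smul c)
  have g2 : Good (fun s => c * (x s - 2 * R x s) + R (fun a => Φ a + c * R x a) s) :=
    ((hx.sub (gI.smul 2)).smul c).add g1.R
  have g3 : Good (fun s => c * x s + R Φ s) := (hx.smul c).add hΦ.R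
  rcases lt_or_ge b 0 with hb | hb
  · simp [R_neg hb]
  apply le_antisymm
  · obtain ⟨r, r1, r2, r3⟩ := R_attain g3.1 hb
    obtain ⟨a, a1, a2, a3⟩ := R_attain hΦ.1 r1
    obtain ⟨s, s1, s2, s3⟩ := oneB hx.1 a1 a2 r2
    have k1 := R_le g2.1 (a1.trans s1) s2
    have k2 := R_le g1.1 a1 s1
    have := mul_le_mul_of_nonneg_left s3 hc
    beta_reduce at k1 k2 r3
    linarith
  · obtain ⟨s, s1, s2, s3⟩ := R_attain g2.1 hb
    obtain ⟨a, a1, a2, a3⟩ := R_attain g1.1 s1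
    obtain ⟨r, r1, r2, r3⟩ := oneA hx.1 a1 a2 s2
    have k1 := R_le g3.1 (a1.trans r1) r2
    have k2 := R_le hΦ.1 a1 r1
    have := mul_le_mul_of_nonneg_left r3 hc
    beta_reduce at k1 k2 s3 a3
    linarith

/-- iterated chain infimum -/
noncomputable def J (U : ℕ → ℝ) : ℕ → ℕ → (ℝ → ℝ) → (ℝ → ℝ) → ℝ → ℝ
  | _, 0, _, _ => fun _ => 0
  | i, n + 1, X, Y => R (fun s => U (i + 1) * X s + J U (i + 1) n Y X s)

theorem J_good (U : ℕ → ℝ) (n : ℕ) : ∀ (i : ℕ) {X Y : ℝ → ℝ}, Good X → Good Y → Good (J U i n X Y) := by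
  induction n with
  | zero => intro i X Y _ _; exact Good.zero
  | succ n ih =>
    intro i X Y hX hY
    exact ((hX.smul _).add (ih (i+1) hY hX)).R

theorem J_drop (U : ℕ → ℝ) (n : ℕ) : ∀ (i : ℕ) {X Y : ℝ → ℝ}, U (i + n + 1) = 0 →
    J U i (n + 1) X Y = J U i n X Y := by
  induction n with
  | zero =>
    intro i X Y h
    simp only [add_zero] at h
    simp only [J, h]
    funext t
    have := R_mul (fun _ => 0) (le_refl (0:ℝ))
    simp only [mul_zero, zero_mul] at this ⊢
    simpa using congrFun this t
  | succ n ih =>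
    intro i X Y h
    rw [J, ih (i+1) (by rw [← h]; congr 1; ring)]
    rfl

theorem peel (U : ℕ → ℝ) (c2 : ℝ) (N : ℕ) (hU : ∀ i, i ≤ N → 0 ≤ U i)
    (hrec : ∀ i, c2 * U (i + 1) = U (i + 2) + U i)
    {x y : ℝ → ℝ} (hx : Good x) (hy : Good y) (n : ℕ) : ∀ i, i + n + 1 ≤ N →
    (Even n → J U i n (fun t => x t - 2 * R x t) (fun t => y t + c2 * R x t)
        = fun t => J U i (n + 1) x y t - U (i + 1) * R x t) ∧
    (Odd n → J U i n (fun t => y t + c2 * R x t) (fun t => x t - 2 * R x t)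
        = R (fun t => (U (i + 1) * y t + J U (i + 1) n x y t) + U i * R x t)) := by
  induction n with
  | zero =>
    intro i hi
    refine ⟨fun _ => ?_, fun h => by simp at h⟩
    funext t
    simp only [J, add_zero]
    rw [R_mul _ (hU _ (by omega))]
    ring
  | succ k ih =>
    intro i hi
    refine ⟨fun h => ?_, fun h => ?_⟩
    · have hk : Odd k := by rwa [Nat.even_add_one, Nat.not_even_iff_odd] at h
      funext t
      rw [J, (ih (i+1) (by omega)).2 hk]
      have g : Good (fun t => U (i + 1 + 1) * y t + J U (i + 1 + 1) k x y t) :=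
        (hy.smul _).add (J_good U k _ hx hy)
      rw [twoStep hx g (hU _ (by omega))]
      rfl
    · have hk : Even k := by
        rw [Nat.odd_add_one, Nat.not_odd_iff_even] at h; exact h
      rw [J, (ih (i+1) (by omega)).1 hk]
      congr 1
      funext t
      have := hrec i
      have h2 : c2 * U (i + 1) * R x t = (U (i + 2) + U i) * R x t := by rw [this]
      show U (i + 1) * (y t + c2 * R x t) + (J U (i + 1) (k + 1) x y t - U (i + 2) * R x t) = _
      linarith

end PitAux

namespace PitAux

variable {V : Type*} [NormedAddCommGroup V] [NormedSpace ℝ V] [FiniteDimensional ℝ V]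

def GoodP (π : ℝ → V) : Prop := Continuous π ∧ π 0 = 0

theorem pitman_apply (α : V) (αv : Module.Dual ℝ V) (π : ℝ → V) (t : ℝ) :
    pitman α αv π t = π t - R (fun s => αv (π s)) t • α := rfl

theorem GoodP.coord {π : ℝ → V} (h : GoodP π) (αv : Module.Dual ℝ V) :
    Good (fun t => αv (π t)) :=
  ⟨(LinearMap.continuous_of_finiteDimensional αv).comp h.1, by simp [h.2]⟩

theorem GoodP.pitman {π : ℝ → V} (h : GoodP π) (α : V) (αv : Module.Dual ℝ V) :
    GoodP (pitman α αv π) := by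
  have g := (h.coord αv).R
  refine ⟨?_, ?_⟩
  · exact h.1.sub (g.1.smul continuous_const)
  · rw [pitman_apply, g.2, h.2]; simp

theorem pitman_scale (α : V) (αv : Module.Dual ℝ V) {k : ℝ} (hk : 0 < k) :
    _root_.pitman (k • α) (k⁻¹ • αv) = _root_.pitman α αv := by
  funext π t
  rw [pitman_apply, pitman_apply]
  have := congrFun (R_mul (fun s => αv (π s)) (inv_nonneg.2 hk.le)) t
  simp only [LinearMap.smul_apply, smul_eq_mul]
  rw [this, smul_smul]
  congr 2
  field_simp

def Alt {X : Type*} (f g : X → X) : ℕ → X → X := fun n => match n with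
  | 0 => id
  | n + 1 => Alt g f n ∘ g

theorem pitmanWord_append {B : Type*} (α : B → V) (αv : B → Module.Dual ℝ V) (l l' : List B) (π : ℝ → V) :
    pitmanWord α αv (l ++ l') π = pitmanWord α αv l (pitmanWord α αv l' π) := by
  induction l with
  | nil => rfl
  | cons s l ih =>
    show _root_.pitman (α s) (αv s) (pitmanWord α αv (l ++ l') π) = _
    rw [ih]; rfl

theorem pitmanWord_alternating {B : Type*} (α : B → V) (αv : B → Module.Dual ℝ V) (n : ℕ) :
    ∀ (i i' : B), pitmanWord α αv (CoxeterSystem.alternatingWord i i' n)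
      = Alt (pitman (α i) (αv i)) (pitman (α i') (αv i')) n := by
  induction n with
  | zero => intro i i'; rfl
  | succ n ih =>
    intro i i'
    funext π
    rw [CoxeterSystem.alternatingWord_succ, List.concat_eq_append, pitmanWord_append, ih]
    rfl

theorem alt_formula (U : ℕ → ℝ) (c2 : ℝ) (N : ℕ) (hU : ∀ i, i ≤ N → 0 ≤ U i)
    (hrec : ∀ i, c2 * U (i + 1) = U (i + 2) + U i) (hU0 : U 0 = 0) (hU1 : U 1 = 1) (n : ℕ) :
    ∀ (a b : V) (av bv : Module.Dual ℝ V), av a = 2 → bv b = 2 → av b = - c2 → bv a = -c2 →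
    n + 1 ≤ N → ∀ π : ℝ → V, GoodP π → ∀ t,
    (Even n → Alt (pitman a av) (pitman b bv) (n + 1) π t =
      π t - J U 0 (n + 1) (fun s => bv (π s)) (fun s => av (π s)) t • b
        - J U 0 n (fun s => av (π s)) (fun s => bv (π s)) t • a) ∧
    (Odd n → Alt (pitman a av) (pitman b bv) (n + 1) π t =
      π t - J U 0 (n + 1) (fun s => av (π s)) (fun s => bv (π s)) t • a
        - J U 0 n (fun s => bv (π s)) (fun s => av (π s)) t • b) := by
  induction n with
  | zero =>
    intro a b av bv haa hbb hab hba hN π hπ t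
    refine ⟨fun _ => ?_, fun h => by simp at h⟩
    show pitman b bv π t = _
    rw [pitman_apply]
    simp [J, hU1]
  | succ n ih =>
    intro a b av bv haa hbb hab hba hN π hπ t
    have key := ih b a bv av hbb haa hba hab (by omega) (pitman b bv π) (hπ.pitman b bv) t
    have hstep : Alt (pitman a av) (pitman b bv) (n + 1 + 1) π t
      = Alt (pitman b bv) (pitman a av) (n + 1) (pitman b bv π) t := rfl
    rw [hstep]
    have ex : (fun s => bv (pitman b bv π s))
        = fun s => (fun s => bv (π s)) s - 2 * R (fun s => bv (π s)) s := by
      funext s; rw [pitman_apply]; simp [hbb]; ring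
    have ey : (fun s => av (pitman b bv π s))
        = fun s => (fun s => av (π s)) s + c2 * R (fun s => bv (π s)) s := by
      funext s; rw [pitman_apply]; simp [hab]; ring
    rw [ex, ey] at key
    have p1 := peel U c2 N hU hrec (hπ.coord bv) (hπ.coord av) n 0 (by omega)
    have p2 := peel U c2 N hU hrec (hπ.coord bv) (hπ.coord av) (n + 1) 0 (by omega)
    refine ⟨fun h => ?_, fun h => ?_⟩
    · have hn : Odd n := by rwa [Nat.even_add_one, Nat.not_even_iff_odd] at h
      rw [key.2 hn, p1.2 hn, p2.1 h, pitman_apply]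
      simp only [hU0, hU1, zero_add, zero_mul, add_zero, one_mul]
      have : J U 0 (n+1) (fun s => av (π s)) (fun s => bv (π s))
        = R (fun t => av (π t) + J U 1 n (fun s => bv (π s)) (fun s => av (π s)) t) := by
        simp only [J, zero_add, hU1, one_mul]
      rw [this]
      module
    · have hn : Even n := by
        rw [Nat.odd_add_one, Nat.not_odd_iff_even] at h; exact h
      rw [key.1 hn, p1.1 hn, p2.2 h, pitman_apply]
      simp only [hU0, hU1, zero_add, zero_mul, add_zero, one_mul]
      have : J U 0 (n+1+1) (fun s => av (π s)) (fun s => bv (π s))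
        = R (fun t => av (π t) + J U 1 (n+1) (fun s => bv (π s)) (fun s => av (π s)) t) := by
        rw [J]; simp only [zero_add, hU1, one_mul]
      rw [this]
      module

theorem sin_nonneg_nat {m : ℕ} (hm : 2 ≤ m) {i : ℕ} (hi : i ≤ m) :
    0 ≤ Real.sin (i * (Real.pi / m)) := by
  have hm' : (0:ℝ) < m := by positivity
  apply Real.sin_nonneg_of_nonneg_of_le_pi
  · positivity
  · have : (i:ℝ) ≤ m := by exact_mod_cast hi
    calc (i:ℝ) * (Real.pi / m) ≤ m * (Real.pi / m) := by gcongr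
      _ = Real.pi := by field_simp

theorem sin_pos_one {m : ℕ} (hm : 2 ≤ m) : 0 < Real.sin (Real.pi / m) := by
  have hm' : (2:ℝ) ≤ m := by exact_mod_cast hm
  apply Real.sin_pos_of_pos_of_lt_pi
  · positivity
  · rw [div_lt_iff₀ (by linarith)]; nlinarith [Real.pi_pos]

theorem sin_rec (θ : ℝ) (i : ℕ) :
    2 * Real.cos θ * Real.sin ((i + 1 : ℕ) * θ) = Real.sin ((i + 2 : ℕ) * θ) + Real.sin (i * θ) := by
  have e1 : ((i + 2 : ℕ) : ℝ) * θ = (i + 1 : ℕ) * θ + θ := by push_cast; ring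
  have e2 : (i : ℝ) * θ = (i + 1 : ℕ) * θ - θ := by push_cast; ring
  rw [e1, e2, Real.sin_add, Real.sin_sub]; ring

/-- braid relation, normalized -/
theorem braid_norm {m : ℕ} (hm : 2 ≤ m) (a b : V) (av bv : Module.Dual ℝ V)
    (haa : av a = 2) (hbb : bv b = 2) (hab : av b = - (2 * Real.cos (Real.pi / m)))
    (hba : bv a = - (2 * Real.cos (Real.pi / m))) (π : ℝ → V) (hπ : GoodP π) :
    Alt (pitman a av) (pitman b bv) m π = Alt (pitman b bv) (pitman a av) m π := by
  set θ := Real.pi / m with hθ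
  set U : ℕ → ℝ := fun i => Real.sin (i * θ) / Real.sin θ with hUd
  have hs := sin_pos_one hm
  have hU : ∀ i, i ≤ m → 0 ≤ U i := fun i hi => div_nonneg (sin_nonneg_nat hm hi) hs.le
  have hrec : ∀ i, 2 * Real.cos θ * U (i + 1) = U (i + 2) + U i := by
    intro i
    simp only [hUd]
    rw [← add_div, ← sin_rec]; ring
  have hU0 : U 0 = 0 := by simp [hUd]
  have hU1 : U 1 = 1 := by simp only [hUd, Nat.cast_one, one_mul]; exact div_self hs.ne'
  have hUm : U m = 0 := by
    have : (m:ℝ) * θ = Real.pi := by rw [hθ]; field_simp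
    simp only [hUd, this, Real.sin_pi, zero_div]
  obtain ⟨n, rfl⟩ : ∃ n, m = n + 1 := ⟨m - 1, by omega⟩
  funext t
  have f1 := alt_formula U _ (n+1) hU hrec hU0 hU1 n a b av bv haa hbb hab hba le_rfl π hπ t
  have f2 := alt_formula U _ (n+1) hU hrec hU0 hU1 n b a bv av hbb haa hba hab le_rfl π hπ t
  have d1 := J_drop U n 0 (X := fun s => av (π s)) (Y := fun s => bv (π s)) (by simpa using hUm)
  have d2 := J_drop U n 0 (X := fun s => bv (π s)) (Y := fun s => av (π s)) (by simpa using hUm)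
  rw [d1, d2] at f1 f2
  rcases Nat.even_or_odd n with h | h
  · rw [f1.1 h, f2.1 h]; abel
  · rw [f1.2 h, f2.2 h]; abel

theorem scale_exists {a b c : ℝ} (h : (a = 0 ∧ b = 0 ∧ c = 0) ∨ (a < 0 ∧ b < 0 ∧ a * b = 4 * c ^ 2))
    (hc : 0 ≤ c) : ∃ k : ℝ, 0 < k ∧ a * k = - (2 * c) ∧ b * k⁻¹ = - (2 * c) := by
  rcases h with ⟨h1, h2, h3⟩ | ⟨h1, h2, h3⟩
  · exact ⟨1, one_pos, by simp [h1, h3], by simp [h2, h3]⟩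
  · have hc' : c ≠ 0 := by
      rintro rfl
      nlinarith [mul_pos_of_neg_of_neg h1 h2]
    have hcp : 0 < c := lt_of_le_of_ne hc (Ne.symm hc')
    refine ⟨2 * c / (-a), by apply div_pos <;> linarith, ?_, ?_⟩
    · have := h1.ne; field_simp
    · have := h1.ne; field_simp; linarith

theorem cos_nonneg_nat {m : ℕ} (hm : 2 ≤ m) : 0 ≤ Real.cos (Real.pi / m) := by
  have hm' : (2:ℝ) ≤ m := by exact_mod_cast hm
  apply Real.cos_nonneg_of_mem_Icc
  constructor
  · have : 0 ≤ Real.pi / m := by positivity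
    linarith [Real.pi_pos]
  · gcongr

theorem braid {m : ℕ} (hm : 2 ≤ m) (a b : V) (av bv : Module.Dual ℝ V)
    (haa : av a = 2) (hbb : bv b = 2)
    (h : (m = 2 ∧ av b = 0 ∧ bv a = 0) ∨ (av b < 0 ∧ bv a < 0 ∧
        av b * bv a = 4 * Real.cos (Real.pi / m) ^ 2)) (π : ℝ → V) (hπ : GoodP π) :
    Alt (pitman a av) (pitman b bv) m π = Alt (pitman b bv) (pitman a av) m π := by
  obtain ⟨k, hk, h1, h2⟩ := scale_exists (a := av b) (b := bv a) (c := Real.cos (Real.pi / m))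
    (by
      rcases h with ⟨h0, h1, h2⟩ | h
      · left; refine ⟨h1, h2, ?_⟩; subst h0; simp
      · right; exact h) (cos_nonneg_nat hm)
  rw [← pitman_scale b bv hk]
  apply braid_norm hm _ _ _ _ haa _ _ _ π hπ
  · simp [hbb, hk.ne']
  · simp; linarith
  · simp; linarith

/-- `P κ P = P κ` -/
theorem pitman_kappa {T : ℝ} (α : V) (αv : Module.Dual ℝ V) (h2 : αv α = 2) (π : ℝ → V) (hπ : GoodP π) (t : ℝ)
    (ht : t ∈ Set.Icc 0 T) :
    pitman α αv (fun t => pitman α αv π (T - t) - pitman α αv π T) t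
      = pitman α αv (fun t => π (T - t) - π T) t := by
  set x : ℝ → ℝ := fun s => αv (π s) with hx
  have gx : Good x := hπ.coord αv
  rw [pitman_apply, pitman_apply]
  simp only [pitman_apply]
  rw [← hx]
  have c1 : Continuous (fun s => αv (π (T - s) - π T)) := by
    have := (LinearMap.continuous_of_finiteDimensional αv)
    have := hπ.1
    fun_prop
  have c2 : Continuous (fun s => αv (π (T - s) - R x (T - s) • α - (π T - R x T • α))) := by
    have := (LinearMap.continuous_of_finiteDimensional αv)
    have := hπ.1
    have := gx.R.1
    fun_prop
  have key : R (fun s => αv (π (T - s) - R x (T - s) • α - (π T - R x T • α))) t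
      = R (fun s => αv (π (T - s) - π T)) t + R x T - R x (T - t) := by
    apply le_antisymm
    · obtain ⟨r, r1, r2, r3⟩ := R_attain c1 ht.1
      obtain ⟨s, s1, s2, s3⟩ := oneB gx.1 (a := T - t) (b := T) (r := T - r) (by linarith [ht.2])
        (by linarith) (by linarith)
      have := R_le c2 (s := T - s) (t := t) (by linarith) (by linarith)
      rw [r3]
      simp only [map_sub, map_smul, h2, smul_eq_mul, sub_sub_cancel, hx] at *
      linarith
    · obtain ⟨s, s1, s2, s3⟩ := R_attain c2 ht.1
      obtain ⟨r, r1, r2, r3⟩ := oneA gx.1 (a := T - t) (b := T) (s := T - s) (by linarith [ht.2])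
        (by linarith) (by linarith)
      have := R_le c1 (s := T - r) (t := t) (by linarith) (by linarith)
      rw [s3]
      simp only [map_sub, map_smul, h2, smul_eq_mul, sub_sub_cancel, hx] at *
      linarith
  rw [key]
  module

end PitAux

namespace PitAux

/-- Data of the geometric representation on `B → ℝ`. -/
structure Geo {B : Type*} [Fintype B] [DecidableEq B] {W : Type*} [Group W] {M : CoxeterMatrix B}
    (cs : CoxeterSystem M W) (A : B → B → ℝ) (r : W →* Module.End ℝ (B → ℝ)) : Prop where
  diag : ∀ s, A s s = 2
  two_le : ∀ s t, s ≠ t → 2 ≤ M s t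
  off : ∀ s t, s ≠ t → (M s t = 2 ∧ A s t = 0 ∧ A t s = 0) ∨
      (A s t < 0 ∧ A t s < 0 ∧ A s t * A t s = 4 * Real.cos (Real.pi / (M s t : ℝ)) ^ 2)
  hr : ∀ s x, r (cs.simple s) x = x - (∑ t, A s t * x t) • Pi.single s (1:ℝ)

section
variable {B : Type*} [Fintype B] [DecidableEq B] {W : Type*} [Group W] {M : CoxeterMatrix B}
    {cs : CoxeterSystem M W} {A : B → B → ℝ} {r : W →* Module.End ℝ (B → ℝ)}

theorem coset_decomp (cs : CoxeterSystem M W) (s t : B) (N : ℕ) : ∀ w : W, cs.length w ≤ N →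
    ∃ v n, ¬ cs.IsRightDescent v s ∧ ¬ cs.IsRightDescent v t ∧ cs.length w = cs.length v + n ∧
      (w = v * cs.wordProd (CoxeterSystem.alternatingWord s t n) ∨
        w = v * cs.wordProd (CoxeterSystem.alternatingWord t s n)) := by
  induction N with
  | zero =>
    intro w hw
    have : w = 1 := cs.length_eq_zero_iff.1 (by omega)
    subst this
    exact ⟨1, 0, cs.not_isRightDescent_one s, cs.not_isRightDescent_one t, by simp, Or.inl (by simp [CoxeterSystem.alternatingWord])⟩
  | succ N ih =>
    intro w hw
    -- one descent step, symmetric in `s`, `t`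
    have step : ∀ s t : B, (∀ w : W, cs.length w ≤ N →
        ∃ v n, ¬ cs.IsRightDescent v s ∧ ¬ cs.IsRightDescent v t ∧ cs.length w = cs.length v + n ∧
      (w = v * cs.wordProd (CoxeterSystem.alternatingWord s t n) ∨
        w = v * cs.wordProd (CoxeterSystem.alternatingWord t s n))) → cs.IsRightDescent w s →
        ∃ v n, ¬ cs.IsRightDescent v s ∧ ¬ cs.IsRightDescent v t ∧ cs.length w = cs.length v + n ∧
      (w = v * cs.wordProd (CoxeterSystem.alternatingWord s t n) ∨
        w = v * cs.wordProd (CoxeterSystem.alternatingWord t s n)) := by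
      intro s t ih h
      have hl := cs.isRightDescent_iff.1 h
      obtain ⟨v, n, h1, h2, h3, h4⟩ := ih (w * cs.simple s) (by omega)
      refine ⟨v, n + 1, h1, h2, by omega, ?_⟩
      rcases h4 with h4 | h4
      · right
        rw [CoxeterSystem.alternatingWord_succ, cs.wordProd_concat, ← mul_assoc, ← h4]
        simp
      · cases n with
        | zero =>
          right
          simp [CoxeterSystem.alternatingWord] at h4 ⊢
          rw [← h4]; simp
        | succ k =>
          exfalso
          rw [CoxeterSystem.alternatingWord_succ, cs.wordProd_concat, ← mul_assoc] at h4
          have h5 : w = v * cs.wordProd (CoxeterSystem.alternatingWord s t k) :=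
            mul_right_cancel h4
          have := cs.length_mul_le v (cs.wordProd (CoxeterSystem.alternatingWord s t k))
          have h6 := cs.length_wordProd_le (CoxeterSystem.alternatingWord s t k)
          rw [CoxeterSystem.length_alternatingWord] at h6
          rw [← h5] at this
          omega
    by_cases hs : cs.IsRightDescent w s
    · exact step s t ih hs
    by_cases ht : cs.IsRightDescent w t
    · obtain ⟨v, n, h1, h2, h3, h4⟩ := step t s (fun w hw => by
        obtain ⟨v, n, h1, h2, h3, h4⟩ := ih w hw
        exact ⟨v, n, h2, h1, h3, h4.symm⟩) ht
      exact ⟨v, n, h2, h1, h3, h4.symm⟩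
    · exact ⟨w, 0, hs, ht, by simp, Or.inl (by simp [CoxeterSystem.alternatingWord])⟩

theorem dihedral_pos {E : Type*} [AddCommGroup E] [Module ℝ E] (cs : CoxeterSystem M W)
    (r : W →* Module.End ℝ E) {m : ℕ} (hm : 2 ≤ m) (n : ℕ) :
    ∀ (j : ℕ) (s t : B) (fs ft : E),
    r (cs.simple s) fs = - fs → r (cs.simple t) ft = - ft →
    r (cs.simple s) ft = ft + (2 * Real.cos (Real.pi / m)) • fs →
    r (cs.simple t) fs = fs + (2 * Real.cos (Real.pi / m)) • ft → j + n + 1 ≤ m →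
    ∃ p q : ℝ, 0 ≤ p ∧ 0 ≤ q ∧ r (cs.wordProd (CoxeterSystem.alternatingWord s t n))
      (Real.sin ((j + 1 : ℕ) * (Real.pi / m)) • fs + Real.sin (j * (Real.pi / m)) • ft)
      = p • fs + q • ft := by
  induction n with
  | zero =>
    intro j s t fs ft _ _ _ _ hj
    exact ⟨Real.sin ((j + 1 : ℕ) * (Real.pi / m)), Real.sin (j * (Real.pi / m)), sin_nonneg_nat hm (by omega), sin_nonneg_nat hm (by omega), by simp [CoxeterSystem.alternatingWord]⟩
  | succ n ih =>
    intro j s t fs ft h1 h2 h3 h4 hj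
    obtain ⟨p, q, hp, hq, h⟩ := ih (j + 1) t s ft fs h2 h1 h4 h3 (by omega)
    refine ⟨q, p, hq, hp, ?_⟩
    rw [CoxeterSystem.alternatingWord_succ, cs.wordProd_concat, map_mul, Module.End.mul_apply,
      map_add, map_smul, map_smul, h4, h2]
    have e : Real.sin ((j + 1 : ℕ) * (Real.pi / m)) • (fs + (2 * Real.cos (Real.pi / m)) • ft) +
        Real.sin (j * (Real.pi / m)) • (-ft)
        = Real.sin ((j + 1 + 1 : ℕ) * (Real.pi / m)) • ft +
          Real.sin ((j + 1 : ℕ) * (Real.pi / m)) • fs := by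
      have := sin_rec (Real.pi / m) j
      have h5 : Real.sin ((j + 1 + 1 : ℕ) * (Real.pi / m)) =
        2 * Real.cos (Real.pi / m) * Real.sin ((j + 1 : ℕ) * (Real.pi / m)) -
          Real.sin (j * (Real.pi / m)) := by
        show Real.sin ((j + 2 : ℕ) * (Real.pi / m)) = _
        linarith
      rw [h5]; module
    rw [e, h, add_comm]

theorem Geo.simple_single (G : Geo cs A r) (s t : B) :
    r (cs.simple s) (Pi.single t 1) = Pi.single t 1 - A s t • Pi.single s (1:ℝ) := by
  rw [G.hr]
  congr 2
  simp [Pi.single_apply]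

/-- alternating word (ending in `t`) of length `< m` applied to `e_s` is nonnegative -/
theorem Geo.alt_pos (G : Geo cs A r) {s t : B} (hst : s ≠ t) {n : ℕ} (hn : n + 1 ≤ M s t) :
    ∃ p q : ℝ, 0 ≤ p ∧ 0 ≤ q ∧ r (cs.wordProd (CoxeterSystem.alternatingWord s t n)) (Pi.single s 1)
      = p • Pi.single s (1:ℝ) + q • Pi.single t (1:ℝ) := by
  have hm := G.two_le s t hst
  obtain ⟨k, hk, h1, h2⟩ := scale_exists (a := A s t) (b := A t s)
    (c := Real.cos (Real.pi / (M s t : ℕ)))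
    (by
      rcases G.off s t hst with ⟨h0, h1, h2⟩ | h
      · left; refine ⟨h1, h2, ?_⟩; rw [h0]; simp
      · right; exact h) (cos_nonneg_nat hm)
  have h2' : A t s = - (2 * Real.cos (Real.pi / (M s t : ℕ))) * k := by
    rw [← h2]; field_simp
  obtain ⟨p, q, hp, hq, h⟩ := dihedral_pos cs r hm n 0 s t (Pi.single s 1) (k • Pi.single t (1:ℝ))
    (by rw [G.simple_single, G.diag]; module)
    (by rw [map_smul, G.simple_single, G.diag]; module)
    (by rw [map_smul, G.simple_single, smul_sub, smul_smul, mul_comm k, h1]; module)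
    (by rw [G.simple_single, h2']; module) (by omega)
  have hs := sin_pos_one hm
  simp only [zero_add, Nat.cast_one, one_mul, Nat.cast_zero, zero_mul, Real.sin_zero, zero_smul, add_zero] at h
  rw [map_smul] at h
  refine ⟨(Real.sin (Real.pi / (M s t : ℕ)))⁻¹ * p, (Real.sin (Real.pi / (M s t : ℕ)))⁻¹ * q * k, by positivity, by positivity, ?_⟩
  have := congrArg (fun x => (Real.sin (Real.pi / (M s t : ℕ)))⁻¹ • x) h
  simp only [smul_smul, inv_mul_cancel₀ hs.ne', one_smul] at this
  rw [this]
  module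

theorem alt_le (cs : CoxeterSystem M W) {s t : B} (hm : 2 ≤ M s t) {n : ℕ} {v w : W}
    (hw : w = v * cs.wordProd (CoxeterSystem.alternatingWord s t n)) (hl : cs.length w = cs.length v + n) :
    n ≤ M s t := by
  by_contra hc
  apply cs.not_isReduced_alternatingWord s t (by omega) (not_le.1 hc)
  unfold CoxeterSystem.IsReduced
  have h1 := cs.length_mul_le v (cs.wordProd (CoxeterSystem.alternatingWord s t n))
  have h2 := cs.length_wordProd_le (CoxeterSystem.alternatingWord s t n)
  rw [← hw] at h1
  rw [CoxeterSystem.length_alternatingWord] at *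
  omega

theorem alt_desc (cs : CoxeterSystem M W) {s t : B} {n : ℕ} {v w : W}
    (hw : w = v * cs.wordProd (CoxeterSystem.alternatingWord s t (n + 1)))
    (hl : cs.length w = cs.length v + (n + 1)) : cs.IsRightDescent w t := by
  unfold CoxeterSystem.IsRightDescent
  rw [CoxeterSystem.alternatingWord_succ, cs.wordProd_concat, ← mul_assoc] at hw
  have : w * cs.simple t = v * cs.wordProd (CoxeterSystem.alternatingWord t s n) := by
    rw [hw]; simp
  rw [this]
  have h1 := cs.length_mul_le v (cs.wordProd (CoxeterSystem.alternatingWord t s n))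
  have h2 := cs.length_wordProd_le (CoxeterSystem.alternatingWord t s n)
  rw [CoxeterSystem.length_alternatingWord] at h2
  omega

theorem Geo.root_pos (G : Geo cs A r) (N : ℕ) : ∀ (w : W) (s : B), cs.length w ≤ N →
    ¬ cs.IsRightDescent w s → 0 ≤ r w (Pi.single s 1) := by
  induction N with
  | zero =>
    intro w s hw _
    have : w = 1 := cs.length_eq_zero_iff.1 (by omega)
    subst this
    simp
  | succ N ih =>
    intro w s hw hs
    by_cases h1 : w = 1
    · subst h1; simp
    obtain ⟨t, ht⟩ := cs.exists_rightDescent_of_ne_one h1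
    have hst : s ≠ t := by rintro rfl; exact hs ht
    have hm := G.two_le s t hst
    obtain ⟨v, n, hvs, hvt, hl, hv⟩ := coset_decomp cs s t _ w le_rfl
    cases n with
    | zero =>
      exfalso
      simp [CoxeterSystem.alternatingWord] at hv
      subst hv
      exact hvt ht
    | succ n =>
      rcases hv with hv | hv
      · have hle := alt_le cs hm hv hl
        have hlt : n + 1 < M s t := by
          apply lt_of_le_of_ne hle
          intro heq
          apply hs
          have : cs.wordProd (CoxeterSystem.alternatingWord s t (n + 1))
              = cs.wordProd (CoxeterSystem.alternatingWord t s (n + 1)) := by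
            have := cs.wordProd_braidWord_eq s t
            unfold CoxeterSystem.braidWord at this
            rw [M.symmetric t s, ← heq] at this
            exact this
          rw [this] at hv
          exact alt_desc cs hv hl
        obtain ⟨p, q, hp, hq, h⟩ := G.alt_pos hst (n := n + 1) (by omega)
        rw [hv, map_mul, Module.End.mul_apply, h, map_add, map_smul, map_smul]
        have i1 := ih v s (by omega) hvs
        have i2 := ih v t (by omega) hvt
        exact add_nonneg (smul_nonneg hp i1) (smul_nonneg hq i2)
      · exact absurd (alt_desc cs hv hl) hs

theorem Geo.pos (G : Geo cs A r) {w : W} {s : B} (h : ¬ cs.IsRightDescent w s) :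
    0 ≤ r w (Pi.single s 1) := G.root_pos _ w s le_rfl h

theorem Geo.neg (G : Geo cs A r) {w : W} {s : B} (h : cs.IsRightDescent w s) :
    r w (Pi.single s 1) ≤ 0 := by
  have h1 := G.pos (cs.isRightDescent_iff_not_isRightDescent_mul.1 h)
  rw [map_mul, Module.End.mul_apply, G.simple_single, G.diag] at h1
  have : (Pi.single s 1 : B → ℝ) - (2:ℝ) • Pi.single s 1 = - Pi.single s 1 := by module
  rw [this, map_neg] at h1
  exact neg_nonneg.1 h1

theorem Geo.ne (G : Geo cs A r) (w : W) (s : B) : r w (Pi.single s 1) ≠ 0 := by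
  intro h
  have : r w⁻¹ (r w (Pi.single s 1)) = Pi.single s 1 := by
    rw [← Module.End.mul_apply, ← map_mul]; simp
  rw [h, map_zero] at this
  have := congrFun this s
  simp at this

/-- Both `s` and `t` right descents: factor out the full dihedral longest word. -/
theorem Geo.two_desc (G : Geo cs A r) {s t : B} (hst : s ≠ t) {w : W}
    (hs : cs.IsRightDescent w s) (ht : cs.IsRightDescent w t) :
    ∃ v, cs.length w = cs.length v + M s t ∧
      w = v * cs.wordProd (CoxeterSystem.alternatingWord s t (M s t)) ∧
      w = v * cs.wordProd (CoxeterSystem.alternatingWord t s (M s t)) := by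
  have hbr : cs.wordProd (CoxeterSystem.alternatingWord s t (M s t))
      = cs.wordProd (CoxeterSystem.alternatingWord t s (M s t)) := by
    have := cs.wordProd_braidWord_eq s t
    unfold CoxeterSystem.braidWord at this
    rw [M.symmetric t s] at this
    exact this
  have aux : ∀ (s t : B), s ≠ t → ∀ v n, cs.IsRightDescent w s →
      ¬ cs.IsRightDescent v s → ¬ cs.IsRightDescent v t → cs.length w = cs.length v + n →
      w = v * cs.wordProd (CoxeterSystem.alternatingWord s t n) → n = M s t := by
    intro s t hst v n hs hvs hvt hl hv
    apply le_antisymm (alt_le cs (G.two_le s t hst) hv hl)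
    by_contra hc
    obtain ⟨p, q, hp, hq, h⟩ := G.alt_pos hst (n := n) (by omega)
    have h1 : 0 ≤ r w (Pi.single s 1) := by
      rw [hv, map_mul, Module.End.mul_apply, h, map_add, map_smul, map_smul]
      exact add_nonneg (smul_nonneg hp (G.pos hvs)) (smul_nonneg hq (G.pos hvt))
    exact G.ne w s (le_antisymm (G.neg hs) h1)
  obtain ⟨v, n, hvs, hvt, hl, hv⟩ := coset_decomp cs s t _ w le_rfl
  rcases hv with hv | hv
  · have := aux s t hst v n hs hvs hvt hl hv
    subst this
    exact ⟨v, hl, hv, by rw [← hbr]; exact hv⟩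
  · have := aux t s hst.symm v n ht hvt hvs hl hv
    rw [M.symmetric t s] at this
    subst this
    exact ⟨v, hl, by rw [hbr]; exact hv, hv⟩

/-- Matsumoto's theorem, for a functional on words. -/
theorem Geo.matsumoto (G : Geo cs A r) {X : Type*} (F : List B → X → X)
    (hF : ∀ l l' x, F (l ++ l') x = F l (F l' x)) (S : Set X)
    (hS : ∀ l, ∀ x ∈ S, F l x ∈ S)
    (hbraid : ∀ s t, s ≠ t → ∀ x ∈ S, F (CoxeterSystem.alternatingWord s t (M s t)) x
        = F (CoxeterSystem.alternatingWord t s (M s t)) x) (N : ℕ) :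
    ∀ l l' : List B, l.length ≤ N → cs.IsReduced l → cs.IsReduced l' → cs.wordProd l = cs.wordProd l' →
      ∀ x ∈ S, F l x = F l' x := by
  induction N with
  | zero =>
    intro l l' hl h1 h2 h x hx
    have e1 : l.length = 0 := by omega
    have : l'.length = l.length := by rw [← h1.eq, ← h2.eq, h]
    rw [List.length_eq_zero_iff.1 e1, List.length_eq_zero_iff.1 (this.trans e1)]
  | succ N ih =>
    intro l l' hl h1 h2 h x hx
    have hlen : l'.length = l.length := by rw [← h1.eq, ← h2.eq, h]
    rcases List.eq_nil_or_concat l with rfl | ⟨k, s, rfl⟩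
    · rw [List.length_eq_zero_iff.1 hlen]
    rcases List.eq_nil_or_concat l' with rfl | ⟨k', t, rfl⟩
    · simp at hlen
    simp only [List.length_append, List.length_singleton, List.concat_eq_append] at *
    have r1 : cs.IsReduced k := by simpa using h1.take k.length
    have r2 : cs.IsReduced k' := by simpa using h2.take k'.length
    simp only [cs.wordProd_append, cs.wordProd_singleton] at h
    by_cases hst : s = t
    · subst hst
      rw [hF, hF]
      exact ih k k' (by omega) r1 r2 (mul_right_cancel h) _ (hS _ x hx)
    · set w := cs.wordProd k * cs.simple s with hw
      have lw : cs.length w = k.length + 1 := by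
        have := h1.eq
        simpa [cs.wordProd_append] using this
      have hs : cs.IsRightDescent w s := by
        unfold CoxeterSystem.IsRightDescent
        have : w * cs.simple s = cs.wordProd k := by rw [hw]; simp
        rw [this, lw, r1.eq]; omega
      have ht : cs.IsRightDescent w t := by
        unfold CoxeterSystem.IsRightDescent
        have : w * cs.simple t = cs.wordProd k' := by rw [h]; simp
        rw [this, lw, r2.eq]; omega
      obtain ⟨v, hlv, hv1, hv2⟩ := G.two_desc hst hs ht
      obtain ⟨lv, hlvr, hlve⟩ := cs.exists_isReduced v
      have hm := G.two_le s t hst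
      obtain ⟨m, hm'⟩ : ∃ m, M s t = m + 1 := ⟨M s t - 1, by omega⟩
      have lvl : lv.length = cs.length v := by rw [hlve]; exact hlvr.eq.symm
      -- one side
      have side : ∀ (s t : B) (k : List B), k.length ≤ N → cs.IsReduced k → w = cs.wordProd k * cs.simple t →
          w = v * cs.wordProd (CoxeterSystem.alternatingWord s t (m + 1)) → cs.length w = cs.length v + (m + 1) →
          F (k ++ [t]) x = F lv (F (CoxeterSystem.alternatingWord s t (m + 1)) x) := by
        intro s t k hk rk hwk hwv hl
        rw [CoxeterSystem.alternatingWord_succ, List.concat_eq_append, ← hF, ← List.append_assoc, hF, hF _ [t]]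
        have hprod : cs.wordProd k = cs.wordProd (lv ++ CoxeterSystem.alternatingWord t s m) := by
          rw [cs.wordProd_append, ← hlve]
          rw [CoxeterSystem.alternatingWord_succ, cs.wordProd_concat, ← mul_assoc, hwk] at hwv
          exact mul_right_cancel hwv
        apply ih k _ hk rk _ hprod _ (hS _ x hx)
        unfold CoxeterSystem.IsReduced
        rw [← hprod, rk.eq, List.length_append, CoxeterSystem.length_alternatingWord, lvl]
        have := cs.length_mul_simple (cs.wordProd k) t
        rw [← hwk, rk.eq] at this
        have h5 := cs.length_wordProd_le (lv ++ CoxeterSystem.alternatingWord t s m)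
        rw [← hprod, rk.eq, List.length_append, CoxeterSystem.length_alternatingWord, lvl] at h5
        omega
      rw [hm'] at hlv hv1 hv2
      have b := hbraid s t hst x hx
      rw [hm'] at b
      rw [side t s k (by omega) r1 rfl hv2 hlv, side s t k' (by omega) r2 h hv1 hlv, b]

end

end PitAux

namespace PitAux

theorem exists_form {W : Type*} [Group W] [Finite W] {E : Type*} [AddCommGroup E] [Module ℝ E]
    [FiniteDimensional ℝ E] (ρ : W →* Module.End ℝ E) :
    ∃ Q : E →ₗ[ℝ] E →ₗ[ℝ] ℝ, (∀ x y, Q x y = Q y x) ∧ (∀ x, 0 ≤ Q x x) ∧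
      (∀ x, Q x x = 0 → x = 0) ∧ ∀ w x y, Q (ρ w x) (ρ w y) = Q x y := by
  classical
  have := Fintype.ofFinite W
  let b := Module.finBasis ℝ E
  refine ⟨LinearMap.mk₂ ℝ (fun x y => ∑ w : W, ∑ i, b.repr (ρ w x) i * b.repr (ρ w y) i) ?_ ?_ ?_ ?_,
    ?_, ?_, ?_, ?_⟩
  · intro x y z
    simp [add_mul, Finset.sum_add_distrib]
  · intro c x y
    simp [Finset.mul_sum, mul_assoc]
  · intro x y z
    simp [mul_add, Finset.sum_add_distrib]
  · intro c x y
    simp only [map_smul, Finsupp.smul_apply, smul_eq_mul, Finset.mul_sum]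
    refine Finset.sum_congr rfl fun w _ => Finset.sum_congr rfl fun i _ => by ring
  · intro x y
    simp only [LinearMap.mk₂_apply]
    refine Finset.sum_congr rfl fun w _ => Finset.sum_congr rfl fun i _ => by ring
  · intro x
    simp only [LinearMap.mk₂_apply]
    exact Finset.sum_nonneg fun w _ => Finset.sum_nonneg fun i _ => mul_self_nonneg _
  · intro x hx
    simp only [LinearMap.mk₂_apply] at hx
    have h1 := (Finset.sum_eq_zero_iff_of_nonneg
      (fun w _ => Finset.sum_nonneg fun i _ => mul_self_nonneg _)).1 hx 1 (Finset.mem_univ _)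
    have h2 := (Finset.sum_eq_zero_iff_of_nonneg (fun i _ => mul_self_nonneg _)).1 h1
    apply b.ext_elem
    intro i
    have := h2 i (Finset.mem_univ _)
    simpa using this
  · intro w x y
    simp only [LinearMap.mk₂_apply]
    refine (Fintype.sum_equiv (Equiv.mulRight w) _ _ ?_)
    intro v
    simp [map_mul]

theorem form_refl {E : Type*} [AddCommGroup E] [Module ℝ E] (Q : E →ₗ[ℝ] E →ₗ[ℝ] ℝ)
    (f : E → ℝ) (a : E) (ha : f a = 2) (S : E →ₗ[ℝ] E) (hS : ∀ x, S x = x - f x • a)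
    (hQ : ∀ x y, Q (S x) (S y) = Q x y) (x : E) : f x * Q a a = 2 * Q a x := by
  have h := hQ a x
  rw [hS, hS, ha] at h
  simp only [map_sub, map_smul, LinearMap.sub_apply, LinearMap.smul_apply, smul_eq_mul] at h
  linarith

section
variable {V : Type*} [NormedAddCommGroup V] [NormedSpace ℝ V] [FiniteDimensional ℝ V]
  {B : Type*} [Fintype B] [DecidableEq B] {W : Type*} [Group W] [Finite W] {M : CoxeterMatrix B}

theorem exists_geo (cs : CoxeterSystem M W)
    (α : B → V) (αv : B → Module.Dual ℝ V)
    (hpair : ∀ s, αv s (α s) = 2)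
    (ρ : W →* Module.End ℝ V)
    (hρs : ∀ s v, ρ (cs.simple s) v = v - αv s v • α s)
    (hM : ∀ s s' : B, s ≠ s' →
      (M s s' = 2 ∧ αv s (α s') = 0 ∧ αv s' (α s) = 0) ∨
      (αv s (α s') < 0 ∧ αv s' (α s) < 0 ∧
        αv s (α s') * αv s' (α s) = 4 * Real.cos (Real.pi / (M s s' : ℝ)) ^ 2)) :
    ∃ r : W →* Module.End ℝ (B → ℝ), Geo cs (fun s t => αv s (α t)) r ∧
      ∀ w x, ∑ t, (r w x) t • α t = ρ w (∑ t, x t • α t) := by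
  let f : B → Module.End ℝ (B → ℝ) := fun s =>
    { toFun := fun x => x - (∑ t, αv s (α t) * x t) • Pi.single s (1:ℝ)
      map_add' := by
        intro x y
        simp only [Pi.add_apply, mul_add, Finset.sum_add_distrib]
        module
      map_smul' := by
        intro c x
        have : ∑ t, αv s (α t) * (c • x) t = c * ∑ t, αv s (α t) * x t := by
          rw [Finset.mul_sum]
          refine Finset.sum_congr rfl fun t _ => by simp; ring
        rw [this]
        simp only [RingHom.id_apply]
        module }
  have hf : ∀ s x, f s x = x - (∑ t, αv s (α t) * x t) • Pi.single s (1:ℝ) := fun _ _ => rfl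
  let φ : (B → ℝ) →ₗ[ℝ] V := Fintype.linearCombination ℝ α
  have hφ : ∀ x, φ x = ∑ t, x t • α t := fun x => by simp [φ, Fintype.linearCombination_apply]
  have hφs : ∀ s, φ (Pi.single s 1) = α s := fun s => by
    rw [hφ]; simp [Pi.single_apply]
  have hφf : ∀ s x, φ (f s x) = ρ (cs.simple s) (φ x) := by
    intro s x
    rw [hf, hρs, map_sub, map_smul, hφs]
    congr 2
    rw [hφ, map_sum]
    refine Finset.sum_congr rfl fun t _ => by simp; ring
  have hlift : M.IsLiftable f := by
    intro i i'
    by_cases hi : i = i'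
    · subst hi
      rw [M.diagonal, pow_one]
      ext1 x
      ext1
      simp only [LinearMap.comp_apply, Module.End.mul_apply, Module.End.one_apply]
      rw [hf i (f i _)]
      rw [hf]
      have e : ∀ y : B → ℝ, ∑ t, αv i (α t) * y t = αv i (φ y) := by
        intro y; rw [hφ, map_sum]; refine Finset.sum_congr rfl fun t _ => by simp; ring
      rw [e, e, map_sub, map_smul, hφs, map_sub, map_smul, hpair]
      simp only [smul_eq_mul]
      module
    by_cases h0 : M i i' = 0
    · rw [h0, pow_zero]
    have hm : 2 ≤ M i i' := by have := M.off_diagonal i i' hi; omega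
    have hk : ∀ k : ℕ, ∀ x, ∃ p q : ℝ, ((f i * f i') ^ k) x = x + p • Pi.single i 1 + q • Pi.single i' 1 := by
      intro k
      induction k with
      | zero => intro x; exact ⟨0, 0, by simp⟩
      | succ k ih =>
        intro x
        obtain ⟨p, q, h⟩ := ih x
        rw [pow_succ', Module.End.mul_apply, h, Module.End.mul_apply]
        set y := x + p • Pi.single i 1 + q • Pi.single i' (1:ℝ) with hy
        rw [hf i, hf i']
        refine ⟨p - (∑ t, αv i (α t) * (y - (∑ t, αv i' (α t) * y t) • Pi.single i' (1:ℝ) : B → ℝ) t), q - (∑ t, αv i' (α t) * y t), ?_⟩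
        generalize (∑ t, αv i (α t) * (y - (∑ t, αv i' (α t) * y t) • Pi.single i' (1:ℝ) : B → ℝ) t) = u
        generalize (∑ t, αv i' (α t) * y t) = u'
        rw [hy]; module
    have hkφ : ∀ k : ℕ, ∀ x, φ (((f i * f i') ^ k) x) = ρ ((cs.simple i * cs.simple i') ^ k) (φ x) := by
      intro k
      induction k with
      | zero => intro x; simp
      | succ k ih =>
        intro x
        rw [pow_succ', Module.End.mul_apply, Module.End.mul_apply, hφf, hφf, ih, pow_succ']
        simp only [map_mul, Module.End.mul_apply]
    refine LinearMap.ext fun x => ?_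
    obtain ⟨p, q, h⟩ := hk (M i i') x
    have h2 := hkφ (M i i') x
    rw [cs.simple_mul_simple_pow, h, map_add, map_add, map_smul, map_smul, hφs, hφs, map_one, Module.End.one_apply] at h2
    have h3 : p • α i + q • α i' = 0 := by
      rw [add_assoc] at h2; exact add_eq_left.1 h2
    have e1 := congrArg (αv i) h3
    have e2 := congrArg (αv i') h3
    simp only [map_add, map_smul, hpair, smul_eq_mul, map_zero] at e1 e2
    have hne : 0 < 4 - αv i (α i') * αv i' (α i) := by
      rcases hM i i' hi with ⟨_, h1, _⟩ | ⟨_, _, h1⟩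
      · rw [h1]; norm_num
      · rw [h1]
        have := sin_pos_one hm
        have := Real.sin_sq_add_cos_sq (Real.pi / (M i i' : ℝ))
        nlinarith
    have hp : p = 0 := by
      have : p * (4 - αv i (α i') * αv i' (α i)) = 0 := by linear_combination 2 * e1 - αv i (α i') * e2
      exact (mul_eq_zero.1 this).resolve_right hne.ne'
    have hq : q = 0 := by rw [hp] at e2; linarith
    rw [h, hp, hq]; simp
  let r := cs.lift ⟨f, hlift⟩
  have hrf : ∀ s, r (cs.simple s) = f s := fun s => cs.lift_apply_simple hlift s
  refine ⟨r, ⟨hpair, ?_, hM, fun s x => by rw [hrf, hf]⟩, ?_⟩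
  · intro s t hst
    have h1 := M.off_diagonal s t hst
    suffices M s t ≠ 0 by omega
    intro h0
    obtain ⟨Q, hsym, hpos, hdef, hinv⟩ := exists_form r
    have hs : ∀ s x, (∑ t, αv s (α t) * x t) * Q (Pi.single s 1) (Pi.single s 1) = 2 * Q (Pi.single s 1) x := by
      intro s x
      refine form_refl Q (fun x => ∑ t, αv s (α t) * x t) (Pi.single s 1) ?_ (r (cs.simple s)) (fun x => by rw [hrf, hf]) (hinv _) x
      simp [Pi.single_apply, hpair]
    have a1 := hs s (Pi.single t 1)
    have a2 := hs t (Pi.single s 1)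
    rw [hsym (Pi.single t 1) (Pi.single s 1)] at a2
    have sm : ∀ s t : B, ∑ u, αv s (α u) * (Pi.single t (1:ℝ) : B → ℝ) u = αv s (α t) := by
      intro s t; simp [Pi.single_apply]
    rw [sm] at a1 a2
    have hA : αv s (α t) * αv t (α s) = 4 := by
      rcases hM s t hst with ⟨h, _⟩ | ⟨_, _, h⟩
      · omega
      · rw [h, h0]; simp
    set b := Q (Pi.single s 1) (Pi.single t 1) with hb
    set c := Q (Pi.single s 1) (Pi.single s 1) with hc
    set d := Q (Pi.single t 1) (Pi.single t 1) with hd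
    have hz := hdef (d • Pi.single s 1 - b • Pi.single t 1) (by
      simp only [map_sub, map_smul, LinearMap.sub_apply, LinearMap.smul_apply, smul_eq_mul]
      rw [hsym (Pi.single t 1) (Pi.single s 1), ← hb, ← hc, ← hd]
      have : b * b = c * d := by
        have : (αv s (α t) * αv t (α s)) * (c * d) = 4 * (b * b) := by
          linear_combination (αv t (α s) * d) * a1 + 2 * b * a2
        rw [hA] at this; linarith
      linear_combination (-d) * this)
    have hd0 : d = 0 := by
      have := congrFun hz s
      simpa [Pi.single_apply, hst] using this
    have := congrFun (hdef _ hd0) t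
    simp at this
  · have key : ∀ w, ∀ x, φ (r w x) = ρ w (φ x) := by
      intro w
      induction w using cs.simple_induction_left with
      | one => intro x; simp
      | mul_simple_left w s ih =>
        intro x
        rw [map_mul, Module.End.mul_apply, hrf, hφf, ih, map_mul, Module.End.mul_apply]
    intro w x
    rw [← hφ, ← hφ, key]

end
end PitAux

namespace PitAux

section
variable {V : Type*} [NormedAddCommGroup V] [NormedSpace ℝ V] [FiniteDimensional ℝ V]
  {B : Type*} [Fintype B] [DecidableEq B] {W : Type*} [Group W] {M : CoxeterMatrix B}

/-- All the data used in the proof, bundled. -/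
structure Sys (cs : CoxeterSystem M W) (α : B → V) (αv : B → Module.Dual ℝ V)
    (ρ : W →* Module.End ℝ V) (r : W →* Module.End ℝ (B → ℝ)) (Q : V →ₗ[ℝ] V →ₗ[ℝ] ℝ) : Prop where
  pair : ∀ s, αv s (α s) = 2
  hρs : ∀ s v, ρ (cs.simple s) v = v - αv s v • α s
  geo : Geo cs (fun s t => αv s (α t)) r
  phi : ∀ w x, ∑ t, (r w x) t • α t = ρ w (∑ t, x t • α t)
  sym : ∀ x y, Q x y = Q y x
  pos : ∀ x, 0 ≤ Q x x
  df : ∀ x, Q x x = 0 → x = 0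
  inv : ∀ w x y, Q (ρ w x) (ρ w y) = Q x y

variable {cs : CoxeterSystem M W} {α : B → V} {αv : B → Module.Dual ℝ V}
    {ρ : W →* Module.End ℝ V} {r : W →* Module.End ℝ (B → ℝ)} {Q : V →ₗ[ℝ] V →ₗ[ℝ] ℝ}

theorem Sys.Qpos (H : Sys cs α αv ρ r Q) (s : B) : 0 < Q (α s) (α s) := by
  refine lt_of_le_of_ne (H.pos _) fun h => ?_
  have h1 := H.pair s
  rw [H.df _ h.symm] at h1
  simp at h1

theorem Sys.Qrefl (H : Sys cs α αv ρ r Q) (s : B) (x : V) :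
    αv s x * Q (α s) (α s) = 2 * Q (α s) x :=
  form_refl Q (αv s) (α s) (H.pair s) (ρ (cs.simple s)) (H.hρs s) (H.inv _) x

theorem Sys.phi_single (H : Sys cs α αv ρ r Q) (w : W) (s : B) :
    ∑ t, (r w (Pi.single s 1)) t • α t = ρ w (α s) := by
  rw [H.phi]; simp [Pi.single_apply]

theorem w0_desc (cs : CoxeterSystem M W) {w₀ : W} (hw₀ : ∀ w : W, cs.length w ≤ cs.length w₀) (s : B) :
    cs.IsRightDescent w₀ s := by
  have h1 := hw₀ (w₀ * cs.simple s)
  have h2 := cs.length_mul_simple w₀ s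
  unfold CoxeterSystem.IsRightDescent
  omega

theorem w0_desc_left (cs : CoxeterSystem M W) {w₀ : W} (hw₀ : ∀ w : W, cs.length w ≤ cs.length w₀) (s : B) :
    cs.IsLeftDescent w₀ s := by
  have h1 := hw₀ (cs.simple s * w₀)
  have h2 := cs.length_simple_mul w₀ s
  unfold CoxeterSystem.IsLeftDescent
  omega

theorem Geo.w0_nonpos {A : B → B → ℝ} (G : Geo cs A r) {w₀ : W}
    (hw₀ : ∀ w : W, cs.length w ≤ cs.length w₀) (x : B → ℝ) (hx : 0 ≤ x) : r w₀ x ≤ 0 := by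
  have e : x = ∑ t, x t • (Pi.single t 1 : B → ℝ) := by
    funext u
    simp [Finset.sum_apply, Pi.single_apply]
  rw [e, map_sum]
  refine Finset.sum_nonpos fun t _ => ?_
  rw [map_smul]
  exact smul_nonpos_of_nonneg_of_nonpos (hx t) (G.neg (w0_desc cs hw₀ t))

theorem Geo.w0_sq {A : B → B → ℝ} (G : Geo cs A r) {w₀ : W}
    (hw₀ : ∀ w : W, cs.length w ≤ cs.length w₀) : w₀ * w₀ = 1 := by
  by_contra h
  obtain ⟨s, hs⟩ := cs.exists_rightDescent_of_ne_one h
  have h1 := G.neg hs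
  have h2 : 0 ≤ r (w₀ * w₀) (Pi.single s 1) := by
    rw [map_mul, Module.End.mul_apply]
    have h3 := G.w0_nonpos hw₀ (-(r w₀ (Pi.single s 1)))
      (neg_nonneg.2 (G.neg (w0_desc cs hw₀ s)))
    rw [map_neg] at h3
    exact neg_nonpos.1 h3
  exact G.ne _ s (le_antisymm h1 h2)

theorem Geo.opp {A : B → B → ℝ} (G : Geo cs A r) {w₀ : W}
    (hw₀ : ∀ w : W, cs.length w ≤ cs.length w₀) (s : B) :
    ∃ (t : B) (c : ℝ), 0 < c ∧ r w₀ (Pi.single s 1) = -(c • Pi.single t (1:ℝ)) := by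
  set y := -(r w₀ (Pi.single s 1)) with hy
  have hy0 : 0 ≤ y := neg_nonneg.2 (G.neg (w0_desc cs hw₀ s))
  have hinv : ∀ x, r w₀ (r w₀ x) = x := by
    intro x
    rw [← Module.End.mul_apply, ← map_mul, G.w0_sq hw₀, map_one, Module.End.one_apply]
  have hry : r w₀ y = - Pi.single s 1 := by rw [hy, map_neg, hinv]
  obtain ⟨t, ht⟩ : ∃ t, 0 < y t := by
    by_contra hc
    push Not at hc
    have : y = 0 := le_antisymm hc hy0
    exact G.ne w₀ s (neg_eq_zero.1 this)
  have h1 := G.w0_nonpos hw₀ (y - y t • Pi.single t 1) (by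
    intro u
    by_cases hu : u = t
    · subst hu; simp
    · simpa [hu] using hy0 u)
  rw [map_sub, map_smul, hry] at h1
  have hz := G.neg (w0_desc cs hw₀ t)
  set z := r w₀ (Pi.single t 1) with hzd
  have hz2 : z = z s • Pi.single s 1 := by
    funext u
    by_cases hu : u = s
    · subst hu; simp
    · have a1 := h1 u
      have a2 := hz u
      simp [hu] at a1 a2 ⊢
      nlinarith
  have hzs : z s < 0 := by
    refine lt_of_le_of_ne (hz s) fun h => ?_
    rw [h, zero_smul] at hz2
    exact G.ne w₀ t hz2
  refine ⟨t, -(z s)⁻¹, by rw [neg_pos]; exact inv_lt_zero.2 hzs, ?_⟩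
  have e := hinv (Pi.single t 1)
  rw [← hzd, hz2, map_smul] at e
  rw [← e, smul_smul, neg_mul, inv_mul_cancel₀ hzs.ne]
  simp

theorem Sys.opp (H : Sys cs α αv ρ r Q) {w₀ : W}
    (hw₀ : ∀ w : W, cs.length w ≤ cs.length w₀) (s : B) :
    ∃ (t : B) (c : ℝ), 0 < c ∧ ρ w₀ (α s) = -(c • α t) ∧ ∀ v, αv t (-(ρ w₀ v)) = c * αv s v := by
  obtain ⟨t, c, hc, h⟩ := H.geo.opp hw₀ s
  have h1 : ρ w₀ (α s) = -(c • α t) := by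
    rw [← H.phi_single, h]; simp [Pi.single_apply]
  refine ⟨t, c, hc, h1, fun v => ?_⟩
  have a1 := H.Qrefl t (-(ρ w₀ v))
  have a2 := H.Qrefl s v
  rw [← H.inv w₀ (α s) (α s), ← H.inv w₀ (α s) v, h1] at a2
  simp only [map_neg, map_smul, LinearMap.neg_apply, LinearMap.smul_apply, smul_eq_mul] at a1 a2 ⊢
  have hq := H.Qpos t
  have : (c * Q (α t) (α t)) * (-(αv t (ρ w₀ v)) - c * αv s v) = 0 := by
    linear_combination c * a1 - a2
  have := (mul_eq_zero.1 this).resolve_left (by positivity)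
  linarith

theorem Sys.pitman_g (H : Sys cs α αv ρ r Q) {w₀ : W}
    (hw₀ : ∀ w : W, cs.length w ≤ cs.length w₀) (s : B) :
    ∃ t, ∀ π : ℝ → V, pitman (α t) (αv t) (fun u => -(ρ w₀ (π u)))
      = fun u => -(ρ w₀ (pitman (α s) (αv s) π u)) := by
  obtain ⟨t, c, hc, h1, h2⟩ := H.opp hw₀ s
  refine ⟨t, fun π => funext fun u => ?_⟩
  rw [pitman_apply, pitman_apply]
  simp only [h2]
  rw [R_mul _ hc.le, map_sub, map_smul, h1]
  module

/-! ### Paths -/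

theorem pw_good (α : B → V) (αv : B → Module.Dual ℝ V) (l : List B) {π : ℝ → V} (h : GoodP π) :
    GoodP (pitmanWord α αv l π) := by
  induction l with
  | nil => exact h
  | cons s l ih => exact ih.pitman (α s) (αv s)

theorem pitman_congr {T : ℝ} (a : V) (av : Module.Dual ℝ V) {π π' : ℝ → V}
    (h : ∀ t ∈ Set.Icc 0 T, π t = π' t) : ∀ t ∈ Set.Icc 0 T, pitman a av π t = pitman a av π' t := by
  intro t ht
  unfold pitman
  rw [h t ht]
  congr 3
  refine Set.image_congr fun u hu => ?_
  rw [h u ⟨hu.1, hu.2.trans ht.2⟩]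

theorem pw_congr {T : ℝ} (α : B → V) (αv : B → Module.Dual ℝ V) (l : List B) {π π' : ℝ → V}
    (h : ∀ t ∈ Set.Icc 0 T, π t = π' t) :
    ∀ t ∈ Set.Icc 0 T, pitmanWord α αv l π t = pitmanWord α αv l π' t := by
  induction l with
  | nil => exact h
  | cons s l ih => exact pitman_congr (α s) (αv s) ih

theorem pitman_dom (a : V) (av : Module.Dual ℝ V) {π : ℝ → V} (hπ : GoodP π) {t : ℝ} (ht : 0 ≤ t)
    (h : ∀ u ∈ Set.Icc 0 t, 0 ≤ av (π u)) : pitman a av π t = π t := by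
  rw [pitman_apply]
  have hg := hπ.coord av
  obtain ⟨u, hu0, hut, hu⟩ := R_attain hg.1 ht
  have h1 := R_le hg.1 le_rfl ht
  have h2 := h u ⟨hu0, hut⟩
  have h3 := hg.2
  have : R (fun s => av (π s)) t = 0 := by
    apply le_antisymm
    · rw [← h3]; exact h1
    · rw [hu]; exact h2
  rw [this]; simp

theorem pw_dom {T : ℝ} (α : B → V) (αv : B → Module.Dual ℝ V) (l : List B) {π : ℝ → V} (hπ : GoodP π)
    (h : ∀ s, ∀ u ∈ Set.Icc 0 T, 0 ≤ αv s (π u)) : ∀ t ∈ Set.Icc 0 T, pitmanWord α αv l π t = π t := by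
  induction l with
  | nil => intro t _; rfl
  | cons s l ih =>
    intro t ht
    have := pitman_congr (α s) (αv s) ih t ht
    refine this.trans (pitman_dom _ _ hπ ht.1 fun u hu => h s u ⟨hu.1, hu.2.trans ht.2⟩)

theorem pitman_nonneg {a : V} {av : Module.Dual ℝ V} (h2 : av a = 2) {π : ℝ → V} (hπ : GoodP π) {t : ℝ}
    (ht : 0 ≤ t) : 0 ≤ av (pitman a av π t) := by
  rw [pitman_apply, map_sub, map_smul, h2, smul_eq_mul]
  have hg := hπ.coord av
  have h1 := R_le hg.1 le_rfl ht
  have h3 := hg.2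
  have h4 := R_le hg.1 ht le_rfl
  simp only at *
  linarith

theorem pitman_idem {a : V} {av : Module.Dual ℝ V} (h2 : av a = 2) {π : ℝ → V} (hπ : GoodP π) :
    pitman a av (pitman a av π) = pitman a av π := by
  funext t
  rcases lt_or_ge t 0 with ht | ht
  · rw [pitman_apply, R_neg ht]; simp
  · exact pitman_dom a av (hπ.pitman a av) ht fun u hu => pitman_nonneg h2 hπ hu.1

theorem Sys.pw_eq (H : Sys cs α αv ρ r Q) {l l' : List B} (h1 : cs.IsReduced l) (h2 : cs.IsReduced l')
    (h : cs.wordProd l = cs.wordProd l') {π : ℝ → V} (hπ : GoodP π) :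
    pitmanWord α αv l π = pitmanWord α αv l' π := by
  refine H.geo.matsumoto (pitmanWord α αv) (pitmanWord_append α αv) {π | GoodP π}
    (fun l x hx => pw_good α αv l hx) ?_ _ l l' le_rfl h1 h2 h π hπ
  intro s t hst x hx
  rw [pitmanWord_alternating, pitmanWord_alternating]
  exact braid (H.geo.two_le s t hst) _ _ _ _ (H.pair s) (H.pair t) (H.geo.off s t hst) x hx

theorem Sys.absorbR (H : Sys cs α αv ρ r Q) {w₀ : W}
    (hw₀ : ∀ w : W, cs.length w ≤ cs.length w₀) {l₀ : List B} (hl : cs.wordProd l₀ = w₀)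
    (hr : cs.IsReduced l₀) (s : B) {π : ℝ → V} (hπ : GoodP π) :
    pitmanWord α αv l₀ (pitman (α s) (αv s) π) = pitmanWord α αv l₀ π := by
  obtain ⟨k, hk, hke⟩ := cs.exists_isReduced (w₀ * cs.simple s)
  have hp : cs.wordProd (k ++ [s]) = w₀ := by
    rw [cs.wordProd_append, ← hke]; simp
  have hkr : cs.IsReduced (k ++ [s]) := by
    unfold CoxeterSystem.IsReduced
    have h1 := cs.isRightDescent_iff.1 (w0_desc cs hw₀ s)
    have h2 := hk.eq
    rw [← hke] at h2
    rw [hp, List.length_append, List.length_singleton]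
    omega
  rw [H.pw_eq hr hkr (hl.trans hp.symm) (hπ.pitman _ _), H.pw_eq hr hkr (hl.trans hp.symm) hπ,
    pitmanWord_append, pitmanWord_append]
  congr 1
  exact pitman_idem (H.pair s) hπ

theorem Sys.absorbL (H : Sys cs α αv ρ r Q) {w₀ : W}
    (hw₀ : ∀ w : W, cs.length w ≤ cs.length w₀) {l₀ : List B} (hl : cs.wordProd l₀ = w₀)
    (hr : cs.IsReduced l₀) (s : B) {π : ℝ → V} (hπ : GoodP π) {t : ℝ} (ht : 0 ≤ t) :
    0 ≤ αv s (pitmanWord α αv l₀ π t) := by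
  obtain ⟨k, hk, hke⟩ := cs.exists_isReduced (cs.simple s * w₀)
  have hp : cs.wordProd (s :: k) = w₀ := by
    rw [cs.wordProd_cons, ← hke]; simp
  have hkr : cs.IsReduced (s :: k) := by
    unfold CoxeterSystem.IsReduced
    have h1 := cs.isLeftDescent_iff.1 (w0_desc_left cs hw₀ s)
    have h2 := hk.eq
    rw [← hke] at h2
    rw [hp, List.length_cons]
    omega
  rw [H.pw_eq hr hkr (hl.trans hp.symm) hπ]
  exact pitman_nonneg (H.pair s) (pw_good α αv k hπ) ht

/-- The map `(-w₀) ∘ κ`. -/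
def K (T : ℝ) (g : V → V) (π : ℝ → V) : ℝ → V := fun t => -(g (π (T - t) - π T))

theorem K_good (T : ℝ) (g : V →ₗ[ℝ] V) {π : ℝ → V} (h : GoodP π) : GoodP (K T g π) := by
  refine ⟨?_, by simp [K]⟩
  have hg : Continuous g := g.continuous_of_finiteDimensional
  exact (hg.comp ((h.1.comp (continuous_const.sub continuous_id)).sub continuous_const)).neg

theorem K_congr {T : ℝ} (hT : 0 < T) (g : V → V) {π π' : ℝ → V} (h : ∀ t ∈ Set.Icc 0 T, π t = π' t) :
    ∀ t ∈ Set.Icc 0 T, K T g π t = K T g π' t := by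
  intro t ht
  unfold K
  rw [h (T - t) ⟨by linarith [ht.2], by linarith [ht.1]⟩, h T ⟨hT.le, le_rfl⟩]

theorem Sys.step (H : Sys cs α αv ρ r Q) {w₀ : W}
    (hw₀ : ∀ w : W, cs.length w ≤ cs.length w₀) {l₀ : List B} (hl : cs.wordProd l₀ = w₀)
    (hr : cs.IsReduced l₀) {T : ℝ} (s : B) {π : ℝ → V} (hπ : GoodP π) :
    ∀ t ∈ Set.Icc 0 T, pitmanWord α αv l₀ (K T (ρ w₀) (pitman (α s) (αv s) π)) t
      = pitmanWord α αv l₀ (K T (ρ w₀) π) t := by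
  obtain ⟨t', ht'⟩ := H.pitman_g hw₀ s
  intro t ht
  rw [← H.absorbR hw₀ hl hr t' (K_good T (ρ w₀) hπ),
    ← H.absorbR hw₀ hl hr t' (K_good T (ρ w₀) (hπ.pitman (α s) (αv s)))]
  refine pw_congr α αv l₀ ?_ t ht
  intro u hu
  unfold K
  rw [ht' (fun u => pitman (α s) (αv s) π (T - u) - pitman (α s) (αv s) π T),
    ht' (fun u => π (T - u) - π T)]
  simp only
  rw [pitman_kappa (α s) (αv s) (H.pair s) π hπ u hu]

theorem Sys.iii (H : Sys cs α αv ρ r Q) {w₀ : W}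
    (hw₀ : ∀ w : W, cs.length w ≤ cs.length w₀) {l₀ : List B} (hl : cs.wordProd l₀ = w₀)
    (hr : cs.IsReduced l₀) {T : ℝ} (l : List B) {π : ℝ → V} (hπ : GoodP π) :
    ∀ t ∈ Set.Icc 0 T, pitmanWord α αv l₀ (K T (ρ w₀) (pitmanWord α αv l π)) t
      = pitmanWord α αv l₀ (K T (ρ w₀) π) t := by
  induction l with
  | nil => intro t _; rfl
  | cons s l ih =>
    intro t ht
    exact (H.step hw₀ hl hr s (pw_good α αv l hπ) t ht).trans (ih t ht)

theorem Sys.KK (H : Sys cs α αv ρ r Q) {w₀ : W}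
    (hw₀ : ∀ w : W, cs.length w ≤ cs.length w₀) {T : ℝ} {π : ℝ → V} (hπ : GoodP π) :
    K T (ρ w₀) (K T (ρ w₀) π) = π := by
  have hinv : ∀ x, ρ w₀ (ρ w₀ x) = x := by
    intro x
    rw [← Module.End.mul_apply, ← map_mul, H.geo.w0_sq hw₀, map_one, Module.End.one_apply]
  funext t
  unfold K
  simp only [map_sub, map_neg, hinv, sub_sub_cancel, sub_self, hπ.2]
  abel

theorem Sys.i (H : Sys cs α αv ρ r Q) {w₀ : W}
    (hw₀ : ∀ w : W, cs.length w ≤ cs.length w₀) {l₀ : List B} (hl : cs.wordProd l₀ = w₀)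
    (hr : cs.IsReduced l₀) {T : ℝ} {π : ℝ → V} (hπ : GoodP π) :
    ∀ t ∈ Set.Icc 0 T, pitmanWord α αv l₀ (K T (ρ w₀) (pitmanWord α αv l₀ (K T (ρ w₀) π))) t
      = pitmanWord α αv l₀ π t := by
  intro t ht
  rw [H.iii hw₀ hl hr l₀ (K_good T (ρ w₀) hπ) t ht, H.KK hw₀ hπ]

theorem Sys.norm_step (H : Sys cs α αv ρ r Q) {T : ℝ} (hT : 0 < T) (s : B) {η : ℝ → V} (h : GoodP η) :
    Q (η T) (η T) ≤ Q (pitman (α s) (αv s) η T) (pitman (α s) (αv s) η T) ∧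
    (Q (η T) (η T) = Q (pitman (α s) (αv s) η T) (pitman (α s) (αv s) η T) →
      ∃ w, pitman (α s) (αv s) η T = ρ w (η T)) := by
  have hg := h.coord (αv s)
  have h1 := R_le hg.1 le_rfl hT.le
  have h3 := hg.2
  have h4 := R_le hg.1 hT.le le_rfl
  rw [pitman_apply]
  set c := R (fun u => αv s (η u)) T
  simp only at h1 h3 h4
  rw [h3] at h1
  have e : Q (η T - c • α s) (η T - c • α s)
      = Q (η T) (η T) + (-c) * (αv s (η T) - c) * Q (α s) (α s) := by
    have := H.Qrefl s (η T)
    simp only [map_sub, map_smul, LinearMap.sub_apply, LinearMap.smul_apply, smul_eq_mul]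
    rw [H.sym (η T) (α s)]
    linear_combination c * this
  have hq := H.Qpos s
  rw [e]
  constructor
  · have : 0 ≤ (-c) * (αv s (η T) - c) * Q (α s) (α s) :=
      mul_nonneg (mul_nonneg (by linarith) (by linarith)) hq.le
    linarith
  · intro h5
    have : (-c) * (αv s (η T) - c) * Q (α s) (α s) = 0 := by linarith
    rcases mul_eq_zero.1 ((mul_eq_zero.1 this).resolve_right hq.ne') with h6 | h6
    · refine ⟨1, ?_⟩
      have : c = 0 := by linarith
      rw [this]; simp
    · refine ⟨cs.simple s, ?_⟩
      rw [H.hρs]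
      have : c = αv s (η T) := by linarith
      rw [this]

theorem Sys.norm_word (H : Sys cs α αv ρ r Q) {T : ℝ} (hT : 0 < T) (l : List B) {η : ℝ → V} (h : GoodP η) :
    Q (η T) (η T) ≤ Q (pitmanWord α αv l η T) (pitmanWord α αv l η T) ∧
    (Q (η T) (η T) = Q (pitmanWord α αv l η T) (pitmanWord α αv l η T) →
      ∃ w, pitmanWord α αv l η T = ρ w (η T)) := by
  induction l with
  | nil => exact ⟨le_rfl, fun _ => ⟨1, by simp [pitmanWord]⟩⟩
  | cons s l ih =>
    obtain ⟨a1, a2⟩ := ih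
    obtain ⟨b1, b2⟩ := H.norm_step hT s (pw_good α αv l h)
    refine ⟨a1.trans b1, fun e => ?_⟩
    change Q (η T) (η T) = Q (pitman (α s) (αv s) (pitmanWord α αv l η) T)
      (pitman (α s) (αv s) (pitmanWord α αv l η) T) at e
    obtain ⟨w, hw⟩ := a2 (le_antisymm a1 (b1.trans e.symm.le))
    obtain ⟨v, hv⟩ := b2 (le_antisymm b1 (e.symm.le.trans a1))
    refine ⟨v * w, ?_⟩
    rw [map_mul, Module.End.mul_apply, ← hw]
    exact hv

theorem Sys.diff (H : Sys cs α αv ρ r Q) {x : V} (hx : ∀ s, 0 ≤ αv s x) (N : ℕ) :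
    ∀ w : W, cs.length w ≤ N → ∃ y : B → ℝ, 0 ≤ y ∧ x - ρ w x = ∑ t, y t • α t := by
  induction N with
  | zero =>
    intro w hw
    have : w = 1 := cs.length_eq_zero_iff.1 (by omega)
    subst this
    exact ⟨0, le_rfl, by simp⟩
  | succ N ih =>
    intro w hw
    by_cases h1 : w = 1
    · subst h1
      exact ⟨0, le_rfl, by simp⟩
    obtain ⟨s, hs⟩ := cs.exists_rightDescent_of_ne_one h1
    have hl := cs.isRightDescent_iff.1 hs
    obtain ⟨y, hy, he⟩ := ih (w * cs.simple s) (by omega)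
    have hp := H.geo.pos (cs.isRightDescent_iff_not_isRightDescent_mul.1 hs)
    refine ⟨y + αv s x • r (w * cs.simple s) (Pi.single s 1), add_nonneg hy (smul_nonneg (hx s) hp), ?_⟩
    have e2 := H.phi_single (w * cs.simple s) s
    have e3 : ∑ t, (y + αv s x • r (w * cs.simple s) (Pi.single s 1)) t • α t
        = ∑ t, y t • α t + αv s x • ∑ t, (r (w * cs.simple s) (Pi.single s 1)) t • α t := by
      rw [Finset.smul_sum, ← Finset.sum_add_distrib]
      refine Finset.sum_congr rfl fun t _ => ?_
      simp only [Pi.add_apply, Pi.smul_apply, smul_eq_mul]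
      module
    rw [e3, ← he, e2]
    have e4 : ρ w x = ρ (w * cs.simple s) (ρ (cs.simple s) x) := by
      rw [← Module.End.mul_apply, ← map_mul]; simp
    rw [e4, H.hρs, map_sub, map_smul]
    abel

theorem Sys.orbit (H : Sys cs α αv ρ r Q) {x y : V} (hx : ∀ s, 0 ≤ αv s x) (hy : ∀ s, 0 ≤ αv s y)
    {w : W} (h : y = ρ w x) : y = x := by
  obtain ⟨z, hz, he⟩ := H.diff hx _ w le_rfl
  rw [← h] at he
  have h1 : 0 ≤ Q (x - y) y := by
    rw [he, map_sum, LinearMap.sum_apply]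
    refine Finset.sum_nonneg fun t _ => ?_
    rw [map_smul, LinearMap.smul_apply, smul_eq_mul]
    refine mul_nonneg (hz t) ?_
    have a := H.Qrefl t y
    have b := mul_nonneg (hy t) (H.Qpos t).le
    linarith
  have h2 : Q y y = Q x x := by rw [h, H.inv]
  have h3 : Q (x - y) (x - y) = 0 := by
    apply le_antisymm _ (H.pos _)
    have e : Q (x - y) (x - y) = Q x x - Q y y - 2 * Q (x - y) y := by
      simp only [map_sub, LinearMap.sub_apply]
      rw [H.sym y x]; ring
    rw [e]; linarith
  exact (sub_eq_zero.1 (H.df _ h3)).symm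

theorem Sys.iv (H : Sys cs α αv ρ r Q) {w₀ : W}
    (hw₀ : ∀ w : W, cs.length w ≤ cs.length w₀) {l₀ : List B} (hl : cs.wordProd l₀ = w₀)
    (hr : cs.IsReduced l₀) {T : ℝ} (hT : 0 < T) {π : ℝ → V} (hπ : GoodP π) :
    pitmanWord α αv l₀ (K T (ρ w₀) π) T = pitmanWord α αv l₀ π T := by
  have hTm : T ∈ Set.Icc 0 T := ⟨hT.le, le_rfl⟩
  rw [← H.iii hw₀ hl hr l₀ hπ T hTm]
  set ν := pitmanWord α αv l₀ π with hν
  have gν : GoodP ν := pw_good α αv l₀ hπ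
  have dν : ∀ s, ∀ t ∈ Set.Icc 0 T, 0 ≤ αv s (ν t) := fun s t ht => H.absorbL hw₀ hl hr s hπ ht.1
  have gK := K_good T (ρ w₀) gν
  set μ := pitmanWord α αv l₀ (K T (ρ w₀) ν) with hμ
  have gμ : GoodP μ := pw_good α αv l₀ gK
  have dμ : ∀ s, ∀ t ∈ Set.Icc 0 T, 0 ≤ αv s (μ t) := fun s t ht => H.absorbL hw₀ hl hr s gK ht.1
  have hback : pitmanWord α αv l₀ (K T (ρ w₀) μ) T = ν T := by
    rw [hμ, H.i hw₀ hl hr gν T hTm, pw_dom α αv l₀ gν dν T hTm]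
  have kT : ∀ {η : ℝ → V}, GoodP η → K T (ρ w₀) η T = ρ w₀ (η T) := by
    intro η hη
    simp [K, hη.2]
  obtain ⟨a1, a2⟩ := H.norm_word hT l₀ gK
  obtain ⟨b1, -⟩ := H.norm_word hT l₀ (K_good T (ρ w₀) gμ)
  rw [hback, kT gμ, H.inv] at b1
  rw [← hμ, kT gν, H.inv] at a1 a2
  obtain ⟨w, hw⟩ := a2 (le_antisymm a1 b1)
  refine H.orbit (fun s => dν s T hTm) (fun s => dμ s T hTm) (w := w * w₀) ?_
  rw [hw, map_mul, Module.End.mul_apply]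

end
end PitAux

/-- Theorem 4.6 of Biane–Bougerol–O'Connell, properties of the generalized
Schützenberger involution `I = P_{w₀} ∘ (−w₀) ∘ κ`:
(i) `I ∘ I = P_{w₀}`; (ii) `I` restricted to dominant paths is an involution;
(iii) `I ∘ P_{w₀} = I`; (iv) `(Iπ)(T) = (P_{w₀} π)(T)` for every path `π`,
in particular `(Iπ)(T) = π(T)` for dominant `π`. -/
theorem schuetz_involution
    {V : Type*} [NormedAddCommGroup V] [NormedSpace ℝ V] [FiniteDimensional ℝ V]
    (T : ℝ) (hT : 0 < T)
    {B : Type*} [Fintype B] {W : Type*} [Group W] [Finite W]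
    (M : CoxeterMatrix B) (cs : CoxeterSystem M W)
    (α : B → V) (αv : B → Module.Dual ℝ V)
    (hpair : ∀ s, αv s (α s) = 2)
    (ρ : W →* (V ≃ₗ[ℝ] V)) (hρinj : Function.Injective ρ)
    (hρs : ∀ s v, ρ (cs.simple s) v = v - αv s v • α s)
    (hM : ∀ s s' : B, s ≠ s' →
      (M s s' = 2 ∧ αv s (α s') = 0 ∧ αv s' (α s) = 0) ∨
      (αv s (α s') < 0 ∧ αv s' (α s) < 0 ∧
        αv s (α s') * αv s' (α s) = 4 * Real.cos (Real.pi / (M s s' : ℝ)) ^ 2))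
    (w₀ : W) (hw₀ : ∀ w : W, cs.length w ≤ cs.length w₀)
    (l₀ : List B) (hl₀ : cs.wordProd l₀ = w₀) (hl₀red : cs.IsReduced l₀)
    (π : ℝ → V) (hcont : ContinuousOn π (Set.Icc 0 T)) (h0 : π 0 = 0) :
    -- (i) `I ∘ I = P_{w₀}`
    (∀ t ∈ Set.Icc 0 T,
      schuetz T α αv l₀ (fun v => ρ w₀ v) (schuetz T α αv l₀ (fun v => ρ w₀ v) π) t
        = pitmanWord α αv l₀ π t) ∧
    -- (ii) `I` is an involution on dominant paths
    ((∀ s : B, ∀ t ∈ Set.Icc 0 T, 0 ≤ αv s (π t)) →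
      ∀ t ∈ Set.Icc 0 T,
        schuetz T α αv l₀ (fun v => ρ w₀ v) (schuetz T α αv l₀ (fun v => ρ w₀ v) π) t
          = π t) ∧
    -- (iii) `I ∘ P_{w₀} = I`
    (∀ t ∈ Set.Icc 0 T,
      schuetz T α αv l₀ (fun v => ρ w₀ v) (pitmanWord α αv l₀ π) t
        = schuetz T α αv l₀ (fun v => ρ w₀ v) π t) ∧
    -- (iv) duality relation at the endpoint
    (schuetz T α αv l₀ (fun v => ρ w₀ v) π T = pitmanWord α αv l₀ π T) ∧
    ((∀ s : B, ∀ t ∈ Set.Icc 0 T, 0 ≤ αv s (π t)) →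
      schuetz T α αv l₀ (fun v => ρ w₀ v) π T = π T) := by
  classical
  let ρ' : W →* Module.End ℝ V := (LinearEquiv.automorphismGroup.toLinearMapMonoidHom).comp ρ
  obtain ⟨r, G, hφ⟩ := PitAux.exists_geo cs α αv hpair ρ' hρs hM
  obtain ⟨Q, q1, q2, q3, q4⟩ := PitAux.exists_form ρ'
  have H : PitAux.Sys cs α αv ρ' r Q := ⟨hpair, hρs, G, hφ, q1, q2, q3, q4⟩
  have hsch : ∀ η : ℝ → V, schuetz T α αv l₀ (fun v => ρ w₀ v) η
      = pitmanWord α αv l₀ (PitAux.K T (ρ' w₀) η) := fun _ => rfl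
  have hTm : T ∈ Set.Icc 0 T := ⟨hT.le, le_rfl⟩
  let p : ℝ → V := Set.IccExtend hT.le (Set.restrict (Set.Icc 0 T) π)
  have hp : ∀ t ∈ Set.Icc 0 T, π t = p t := by
    intro t ht
    exact (Set.IccExtend_of_mem hT.le (Set.restrict (Set.Icc 0 T) π) ht).symm
  have gp : PitAux.GoodP p :=
    ⟨(continuousOn_iff_continuous_restrict.1 hcont).Icc_extend', by
      rw [← hp 0 ⟨le_rfl, hT.le⟩, h0]⟩
  have cK := PitAux.K_congr hT (ρ' w₀) hp
  have cW := PitAux.pw_congr α αv l₀ hp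
  have cS := PitAux.pw_congr α αv l₀ cK
  have cSS := PitAux.pw_congr α αv l₀ (PitAux.K_congr hT (ρ' w₀) cS)
  have cSW := PitAux.pw_congr α αv l₀ (PitAux.K_congr hT (ρ' w₀) cW)
  have dom : (∀ s : B, ∀ t ∈ Set.Icc 0 T, 0 ≤ αv s (π t)) →
      ∀ t ∈ Set.Icc 0 T, pitmanWord α αv l₀ π t = π t := by
    intro hd t ht
    rw [cW t ht, hp t ht]
    exact PitAux.pw_dom α αv l₀ gp (fun s u hu => by rw [← hp u hu]; exact hd s u hu) t ht
  have hi : ∀ t ∈ Set.Icc 0 T,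
      schuetz T α αv l₀ (fun v => ρ w₀ v) (schuetz T α αv l₀ (fun v => ρ w₀ v) π) t
        = pitmanWord α αv l₀ π t := by
    intro t ht
    rw [hsch, hsch, cSS t ht, cW t ht]
    exact H.i hw₀ hl₀ hl₀red gp t ht
  have hiv : schuetz T α αv l₀ (fun v => ρ w₀ v) π T = pitmanWord α αv l₀ π T := by
    rw [hsch, cS T hTm, cW T hTm]
    exact H.iv hw₀ hl₀ hl₀red hT gp
  refine ⟨hi, fun hd t ht => (hi t ht).trans (dom hd t ht), ?_, hiv,
    fun hd => hiv.trans (dom hd T hTm)⟩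
  intro t ht
  rw [hsch, hsch, cSW t ht, cS t ht]
  exact H.iii hw₀ hl₀ hl₀red l₀ gp t ht
end
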